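/- arXiv:1512.01465 — 12 statements merged into one kernel-verified Lean document; each statement's English description precedes it below -/
import Mathlib

section
/- For all strictly positive real numbers SNR₁₁ and SNR₁₂ and every pair (β₁,β₂) ∈ (0,1]², there exists a unique ρ ∈ (0,1) satisfying 1 + β₁·SNR₁₁ + β₂·SNR₁₂ + 2ρ·√(β₁·SNR₁₁·β₂·SNR₁₂) = (1 + β₁·SNR₁₁·(1−ρ²))·(1 + β₂·SNR₁₂·(1−ρ²)). (Existence follows since the difference of the two sides is continuous, negative at ρ = 0, positive at ρ = 1, and strictly monotone on [0,1].) -/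
/-!
With `a = β₁ * SNR₁₁`, `b = β₂ * SNR₁₂` and `s = √(a * b)`, the left side of the equation is
nondecreasing in `ρ` and the right side is strictly decreasing on `[0, 1]`, so they meet at most
once. Left minus right is `-(a * b) < 0` at `ρ = 0` and `a + b + 2 * s > 0` at `ρ = 1`, so by the
intermediate value theorem they do meet, strictly between the endpoints.
-/

open Set

theorem existsUnique_mem_Ioo_eq_of_monotoneOn_of_strictAntiOn {α β : Type*}
    [ConditionallyCompleteLinearOrder α] [TopologicalSpace α] [OrderTopology α] [DenselyOrdered α]
    [LinearOrder β] [TopologicalSpace β] [OrderClosedTopology β] {f g : α → β} {a b : α}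
    (hab : a ≤ b) (hf : ContinuousOn f (Icc a b)) (hg : ContinuousOn g (Icc a b))
    (hf_mono : MonotoneOn f (Icc a b)) (hg_anti : StrictAntiOn g (Icc a b))
    (ha : f a < g a) (hb : g b < f b) :
    ∃! x, x ∈ Ioo a b ∧ f x = g x := by
  obtain ⟨x, hx, hfg⟩ : ∃ x ∈ Icc a b, f x = g x :=
    isPreconnected_Icc.intermediate_value₂ (left_mem_Icc.2 hab) (right_mem_Icc.2 hab)
      hf hg ha.le hb.le
  have hxa : a ≠ x := by
    rintro rfl
    exact ha.ne hfg
  have hxb : x ≠ b := by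
    rintro rfl
    exact hb.ne' hfg
  have no_later_crossing {y z : α} (hy : y ∈ Icc a b) (hz : z ∈ Icc a b)
      (hfgy : f y = g y) (hfgz : f z = g z) : ¬ y < z := fun hyz =>
    (calc
      f y ≤ f z := hf_mono hy hz hyz.le
      _ = g z := hfgz
      _ < g y := hg_anti hy hz hyz
      _ = f y := hfgy.symm).false
  refine ⟨x, ⟨⟨hx.1.lt_of_ne hxa, hx.2.lt_of_ne hxb⟩, hfg⟩, ?_⟩
  rintro y ⟨hy, hfgy⟩
  have hy' := Ioo_subset_Icc_self hy
  exact le_antisymm (not_lt.1 (no_later_crossing hx hy' hfg hfgy))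
    (not_lt.1 (no_later_crossing hy' hx hfgy hfg))

theorem strictAntiOn_one_add_mul_one_sub_sq_mul {R : Type*} [Ring R] [LinearOrder R]
    [IsStrictOrderedRing R] {a b : R} (ha : 0 < a) (hb : 0 ≤ b) :
    StrictAntiOn (fun ρ : R => (1 + a * (1 - ρ ^ 2)) * (1 + b * (1 - ρ ^ 2))) (Icc 0 1) := by
  rintro x ⟨hx, -⟩ y ⟨hy, hy_le⟩ hxy
  have hsq : 1 - y ^ 2 < 1 - x ^ 2 := by gcongr
  have hy_nonneg : 0 ≤ 1 - y ^ 2 := sub_nonneg.2 (pow_le_one₀ hy hy_le)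
  have hfst : 1 + a * (1 - y ^ 2) < 1 + a * (1 - x ^ 2) := by gcongr
  have hsnd : 1 + b * (1 - y ^ 2) ≤ 1 + b * (1 - x ^ 2) := by gcongr
  have hfst_nonneg : 0 ≤ 1 + a * (1 - x ^ 2) := by
    have := hy_nonneg.trans hsq.le
    positivity
  exact mul_lt_mul hfst hsnd (by positivity) hfst_nonneg

theorem exists_unique_rho_star_general {a b s : ℝ} (ha : 0 < a) (hb : 0 < b) (hs : 0 ≤ s) :
    ∃! ρ : ℝ, ρ ∈ Ioo (0 : ℝ) 1 ∧
      1 + a + b + 2 * ρ * s = (1 + a * (1 - ρ ^ 2)) * (1 + b * (1 - ρ ^ 2)) := by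
  have hmono : Monotone fun ρ : ℝ => 1 + a + b + 2 * ρ * s := by
    intro x y hxy
    dsimp only
    gcongr
  have hzero : 1 + a + b + 2 * 0 * s < (1 + a * (1 - 0 ^ 2)) * (1 + b * (1 - 0 ^ 2)) := by
    linarith [mul_pos ha hb]
  have hone : (1 + a * (1 - 1 ^ 2)) * (1 + b * (1 - 1 ^ 2)) < 1 + a + b + 2 * 1 * s := by
    linarith
  exact existsUnique_mem_Ioo_eq_of_monotoneOn_of_strictAntiOn zero_le_one (by fun_prop)
    (by fun_prop) (hmono.monotoneOn _) (strictAntiOn_one_add_mul_one_sub_sq_mul ha hb.le)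
    hzero hone

/-- Existence and uniqueness of the sum-rate optimal correlation coefficient
ρ⋆(β₁,β₂): for strictly positive SNRs and (β₁,β₂) ∈ (0,1]², there is a unique
ρ ∈ (0,1) with
1 + β₁·SNR₁₁ + β₂·SNR₁₂ + 2ρ·√(β₁·SNR₁₁·β₂·SNR₁₂)
  = (1 + β₁·SNR₁₁·(1−ρ²))·(1 + β₂·SNR₁₂·(1−ρ²)). -/
theorem exists_unique_rho_star (SNR₁₁ SNR₁₂ : ℝ) (hS₁ : 0 < SNR₁₁) (hS₂ : 0 < SNR₁₂)
    (β₁ β₂ : ℝ) (hβ₁ : β₁ ∈ Set.Ioc (0:ℝ) 1) (hβ₂ : β₂ ∈ Set.Ioc (0:ℝ) 1) :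
    ∃! ρ : ℝ, ρ ∈ Set.Ioo (0:ℝ) 1 ∧
      1 + β₁ * SNR₁₁ + β₂ * SNR₁₂ + 2 * ρ * Real.sqrt (β₁ * SNR₁₁ * (β₂ * SNR₁₂))
        = (1 + β₁ * SNR₁₁ * (1 - ρ ^ 2)) * (1 + β₂ * SNR₁₂ * (1 - ρ ^ 2)) :=
  exists_unique_rho_star_general (mul_pos hβ₁.1 hS₁) (mul_pos hβ₂.1 hS₂) (Real.sqrt_nonneg _)
end

section
/- For every pair (β₁,β₂) ∈ (0,1]² and every ρ ∈ [0,1], f(β₁,β₂,ρ) ≤ f(β₁,β₂,ρ⋆(β₁,β₂)) = (1/2)·log₂(1 + β₁·SNR₁₁ + β₂·SNR₁₂ + 2·ρ⋆(β₁,β₂)·√(β₁·SNR₁₁·β₂·SNR₁₂)); that is, ρ⋆(β₁,β₂) maximizes ρ ↦ f(β₁,β₂,ρ) over [0,1], and at ρ⋆(β₁,β₂) the two expressions inside the minimum defining f are equal. -/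
open Real

/-- The function `f(β₁,β₂,ρ)` appearing in the feedback sum-rate
optimization problem. -/
noncomputable def f (SNR₁₁ SNR₁₂ β₁ β₂ ρ : ℝ) : ℝ :=
  min
    ((1/2) * logb 2 (1 + β₁ * SNR₁₁ + β₂ * SNR₁₂ +
      2 * ρ * Real.sqrt (β₁ * SNR₁₁ * (β₂ * SNR₁₂))))
    ((1/2) * logb 2 ((1 + β₁ * SNR₁₁ * (1 - ρ ^ 2)) * (1 + β₂ * SNR₁₂ * (1 - ρ ^ 2))))

/-!
On `[0, 1]` the first expression in the minimum increases with the correlation `ρ`, because coherent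
combining adds received power, while the second decreases, because correlated inputs carry less
individual information. The minimum of an increasing and a decreasing function is largest where the
two meet.
-/

theorem isMaxOn_min_of_monotoneOn_of_antitoneOn {α β : Type*} [LinearOrder α] [LinearOrder β]
    {g h : α → β} {s : Set α} {x₀ : α} (hg : MonotoneOn g s) (hh : AntitoneOn h s)
    (hx₀ : x₀ ∈ s) (hcross : g x₀ = h x₀) :
    IsMaxOn (fun x => min (g x) (h x)) s x₀ := by
  refine isMaxOn_iff.2 fun x hx => ?_
  rcases le_total x x₀ with hle | hge
  · calc min (g x) (h x) ≤ g x := min_le_left _ _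
      _ ≤ g x₀ := hg hx hx₀ hle
      _ = min (g x₀) (h x₀) := by rw [← hcross, min_self]
  · calc min (g x) (h x) ≤ h x := min_le_right _ _
      _ ≤ h x₀ := hh hx₀ hx hge
      _ = min (g x₀) (h x₀) := by rw [hcross, min_self]

/-- The joint-decoding bound, in bits, on the sum rate over a two-user Gaussian multiple-access
channel with received signal-to-noise ratios `a` and `b` and input correlation `ρ`. -/
noncomputable def jointSumRate (a b ρ : ℝ) : ℝ :=
  (1 / 2) * logb 2 (1 + a + b + 2 * ρ * √(a * b))

/-- The sum, in bits, of the two individual-rate bounds `½ log₂ (1 + a (1 - ρ²))` and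
`½ log₂ (1 + b (1 - ρ²))` at input correlation `ρ`, written as a single logarithm. -/
noncomputable def individualSumRate (a b ρ : ℝ) : ℝ :=
  (1 / 2) * logb 2 ((1 + a * (1 - ρ ^ 2)) * (1 + b * (1 - ρ ^ 2)))

section SumRate

variable {a b : ℝ}

theorem jointSumRate_monotoneOn (ha : 0 ≤ a) (hb : 0 ≤ b) :
    MonotoneOn (jointSumRate a b) (Set.Ici 0) := by
  intro ρ (hρ : 0 ≤ ρ) ρ' _ hle
  unfold jointSumRate
  gcongr
  exact one_lt_two

theorem individualSumRate_antitoneOn (ha : 0 ≤ a) (hb : 0 ≤ b) :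
    AntitoneOn (individualSumRate a b) (Set.Icc 0 1) := by
  intro ρ hρ ρ' hρ' hle
  have hρ_nonneg : 0 ≤ ρ := hρ.1
  have hsub : 0 ≤ 1 - ρ ^ 2 := sub_nonneg.2 (pow_le_one₀ hρ.1 hρ.2)
  have hsub' : 0 ≤ 1 - ρ' ^ 2 := sub_nonneg.2 (pow_le_one₀ hρ'.1 hρ'.2)
  unfold individualSumRate
  gcongr
  exact one_lt_two

end SumRate

/-- ρ⋆(β₁,β₂) maximizes ρ ↦ f(β₁,β₂,ρ) over [0,1], and at ρ⋆(β₁,β₂) both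
expressions inside the minimum defining f coincide, so that
f(β₁,β₂,ρ⋆) = ½·log₂(1 + β₁·SNR₁₁ + β₂·SNR₁₂ + 2·ρ⋆·√(β₁·SNR₁₁·β₂·SNR₁₂)). -/
theorem f_le_f_rho_star (SNR₁₁ SNR₁₂ : ℝ) (hS₁ : 0 < SNR₁₁) (hS₂ : 0 < SNR₁₂)
    (β₁ β₂ ρs : ℝ) (hβ₁ : β₁ ∈ Set.Ioc (0:ℝ) 1) (hβ₂ : β₂ ∈ Set.Ioc (0:ℝ) 1)
    (hρs : ρs ∈ Set.Ioo (0:ℝ) 1)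
    (heq : 1 + β₁ * SNR₁₁ + β₂ * SNR₁₂ +
        2 * ρs * Real.sqrt (β₁ * SNR₁₁ * (β₂ * SNR₁₂))
        = (1 + β₁ * SNR₁₁ * (1 - ρs ^ 2)) * (1 + β₂ * SNR₁₂ * (1 - ρs ^ 2))) :
    (∀ ρ ∈ Set.Icc (0:ℝ) 1, f SNR₁₁ SNR₁₂ β₁ β₂ ρ ≤ f SNR₁₁ SNR₁₂ β₁ β₂ ρs) ∧
      f SNR₁₁ SNR₁₂ β₁ β₂ ρs
        = (1/2) * logb 2 (1 + β₁ * SNR₁₁ + β₂ * SNR₁₂ +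
            2 * ρs * Real.sqrt (β₁ * SNR₁₁ * (β₂ * SNR₁₂))) := by
  have ha : 0 ≤ β₁ * SNR₁₁ := (mul_pos hβ₁.1 hS₁).le
  have hb : 0 ≤ β₂ * SNR₁₂ := (mul_pos hβ₂.1 hS₂).le
  have hf : f SNR₁₁ SNR₁₂ β₁ β₂ = fun ρ =>
      min (jointSumRate (β₁ * SNR₁₁) (β₂ * SNR₁₂) ρ)
        (individualSumRate (β₁ * SNR₁₁) (β₂ * SNR₁₂) ρ) := rfl
  have hcross : jointSumRate (β₁ * SNR₁₁) (β₂ * SNR₁₂) ρs =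
      individualSumRate (β₁ * SNR₁₁) (β₂ * SNR₁₂) ρs :=
    congrArg (fun x => (1 / 2) * logb 2 x) heq
  rw [hf]
  constructor
  · exact isMaxOn_iff.1 <| isMaxOn_min_of_monotoneOn_of_antitoneOn
      ((jointSumRate_monotoneOn ha hb).mono Set.Icc_subset_Ici_self)
      (individualSumRate_antitoneOn ha hb) (Set.Ioo_subset_Icc_self hρs) hcross
  · exact min_eq_left hcross.le
end

section
/- For every pair (β₁,β₂) ∈ (0,1]², one has ρ⋆(β₁,β₂) ≤ ρ⋆(1,1); that is, ρ⋆(1,1) is the maximum of ρ⋆(β₁,β₂) over all (β₁,β₂) ∈ (0,1]². -/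
/-!
Divided by the product of the two signal-to-noise ratios, the equation for `ρ⋆` says that a
function of `ρ` and of the inverse amplitudes `u = 1 / √x`, `v = 1 / √y` vanishes. That function
is strictly increasing in `ρ ∈ [0, 1]` and nondecreasing in `u` and `v`. Raising the
signal-to-noise ratios lowers `u` and `v`, so its zero `ρ⋆` can only move up.
-/

/-- The equation defining `ρ⋆(β₁, β₂)`, in terms of the received signal-to-noise ratios
`x = β₁·SNR₁₁` and `y = β₂·SNR₁₂`. -/
def IsBalanced (x y ρ : ℝ) : Prop :=
  1 + x + y + 2 * ρ * √(x * y) = (1 + x * (1 - ρ ^ 2)) * (1 + y * (1 - ρ ^ 2))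

/-- The left side minus the right side of `IsBalanced x y ρ`, divided by `x * y` and written in
terms of the inverse amplitudes `u = (√x)⁻¹` and `v = (√y)⁻¹`. -/
def balanceGap (u v ρ : ℝ) : ℝ :=
  ρ ^ 2 * (u ^ 2 + v ^ 2) + 2 * ρ * (u * v) - (1 - ρ ^ 2) ^ 2

lemma balanceGap_mul_eq_sub {x y : ℝ} (hx : 0 < x) (hy : 0 < y) (ρ : ℝ) :
    balanceGap (√x)⁻¹ (√y)⁻¹ ρ * (x * y) =
      1 + x + y + 2 * ρ * √(x * y) - (1 + x * (1 - ρ ^ 2)) * (1 + y * (1 - ρ ^ 2)) := by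
  have inv_sq_mul {z : ℝ} (hz : 0 < z) : (√z)⁻¹ ^ 2 * z = 1 := by
    rw [inv_pow, Real.sq_sqrt hz.le, inv_mul_cancel₀ hz.ne']
  have inv_mul {z : ℝ} : (√z)⁻¹ * z = √z := by
    rw [inv_mul_eq_div, Real.div_sqrt]
  rw [Real.sqrt_mul hx.le, balanceGap]
  linear_combination ρ ^ 2 * y * inv_sq_mul hx + ρ ^ 2 * x * inv_sq_mul hy +
    2 * ρ * ((√y)⁻¹ * y * inv_mul (z := x) + √x * inv_mul (z := y))

lemma isBalanced_iff_balanceGap_eq_zero {x y ρ : ℝ} (hx : 0 < x) (hy : 0 < y) :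
    IsBalanced x y ρ ↔ balanceGap (√x)⁻¹ (√y)⁻¹ ρ = 0 := by
  rw [IsBalanced, ← sub_eq_zero, ← balanceGap_mul_eq_sub hx hy,
    mul_eq_zero_iff_right (mul_pos hx hy).ne']

lemma balanceGap_strictMonoOn {u v : ℝ} (hu : 0 ≤ u) (hv : 0 ≤ v) :
    StrictMonoOn (balanceGap u v) (Set.Icc 0 1) := by
  rintro ρ ⟨hρ, -⟩ R ⟨-, hR⟩ hlt
  have increasing_part_le : ρ ^ 2 * (u ^ 2 + v ^ 2) + 2 * ρ * (u * v) ≤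
      R ^ 2 * (u ^ 2 + v ^ 2) + 2 * R * (u * v) := by
    gcongr
  have one_sub_sq_nonneg : 0 ≤ 1 - R ^ 2 :=
    sub_nonneg.2 (pow_le_one₀ (hρ.trans hlt.le) hR)
  have decreasing_part_lt : (1 - R ^ 2) ^ 2 < (1 - ρ ^ 2) ^ 2 := by
    gcongr
  unfold balanceGap
  linarith

lemma balanceGap_le_balanceGap {u v U V ρ : ℝ} (hρ : 0 ≤ ρ) (hu : 0 ≤ u) (hv : 0 ≤ v)
    (huU : u ≤ U) (hvV : v ≤ V) : balanceGap u v ρ ≤ balanceGap U V ρ := by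
  have hU : 0 ≤ U := hu.trans huU
  unfold balanceGap
  gcongr

theorem rho_star_le_rho_star_one_one_general {x y X Y ρ R : ℝ} (hx : 0 < x) (hy : 0 < y)
    (hxX : x ≤ X) (hyY : y ≤ Y) (hρ : ρ ∈ Set.Icc 0 1) (hR : R ∈ Set.Icc 0 1)
    (h : IsBalanced x y ρ) (H : IsBalanced X Y R) : ρ ≤ R := by
  have inv_sqrt_anti {z Z : ℝ} (hz : 0 < z) (hzZ : z ≤ Z) : (√Z)⁻¹ ≤ (√z)⁻¹ :=
    inv_anti₀ (Real.sqrt_pos.2 hz) (Real.sqrt_le_sqrt hzZ)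
  rw [← (balanceGap_strictMonoOn (u := (√x)⁻¹) (v := (√y)⁻¹)
    (by positivity) (by positivity)).le_iff_le hρ hR]
  calc balanceGap (√x)⁻¹ (√y)⁻¹ ρ
    _ = 0 := (isBalanced_iff_balanceGap_eq_zero hx hy).1 h
    _ = balanceGap (√X)⁻¹ (√Y)⁻¹ R :=
      ((isBalanced_iff_balanceGap_eq_zero (hx.trans_le hxX) (hy.trans_le hyY)).1 H).symm
    _ ≤ balanceGap (√x)⁻¹ (√y)⁻¹ R :=
      balanceGap_le_balanceGap hR.1 (by positivity) (by positivity)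
        (inv_sqrt_anti hx hxX) (inv_sqrt_anti hy hyY)

/-- ρ⋆(1,1) is the maximum of ρ⋆(β₁,β₂) over all (β₁,β₂) ∈ (0,1]², where
ρ⋆(β₁,β₂) is (a choice function selecting) the unique ρ ∈ (0,1) satisfying
1 + β₁·SNR₁₁ + β₂·SNR₁₂ + 2ρ·√(β₁·SNR₁₁·β₂·SNR₁₂)
  = (1 + β₁·SNR₁₁·(1−ρ²))·(1 + β₂·SNR₁₂·(1−ρ²)). -/
theorem rho_star_le_rho_star_one_one (SNR₁₁ SNR₁₂ : ℝ)
    (hS₁ : 0 < SNR₁₁) (hS₂ : 0 < SNR₁₂) (ρs : ℝ → ℝ → ℝ)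
    (hρs : ∀ β₁ β₂ : ℝ, β₁ ∈ Set.Ioc (0:ℝ) 1 → β₂ ∈ Set.Ioc (0:ℝ) 1 →
      ρs β₁ β₂ ∈ Set.Ioo (0:ℝ) 1 ∧
      1 + β₁ * SNR₁₁ + β₂ * SNR₁₂ +
          2 * ρs β₁ β₂ * Real.sqrt (β₁ * SNR₁₁ * (β₂ * SNR₁₂))
        = (1 + β₁ * SNR₁₁ * (1 - ρs β₁ β₂ ^ 2)) *
            (1 + β₂ * SNR₁₂ * (1 - ρs β₁ β₂ ^ 2))) :
    ∀ β₁ β₂ : ℝ, β₁ ∈ Set.Ioc (0:ℝ) 1 → β₂ ∈ Set.Ioc (0:ℝ) 1 →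
      ρs β₁ β₂ ≤ ρs 1 1 := by
  intro β₁ β₂ h₁ h₂
  obtain ⟨hρ, h⟩ := hρs β₁ β₂ h₁ h₂
  obtain ⟨hR, H⟩ := hρs 1 1 (by simp) (by simp)
  exact rho_star_le_rho_star_one_one_general (mul_pos h₁.1 hS₁) (mul_pos h₂.1 hS₂)
    (mul_le_mul_of_nonneg_right h₁.2 hS₁.le) (mul_le_mul_of_nonneg_right h₂.2 hS₂.le)
    (Set.Ioo_subset_Icc_self hρ) (Set.Ioo_subset_Icc_self hR) h H
end

section
/- Maximum individual information rate with feedback (Proposition 1): for every real b with 0 ≤ b ≤ 1 + SNR₂₁ + SNR₂₂ + 2·√(SNR₂₁·SNR₂₂), the supremum of f₁ᶠᴮ(β₁,β₂,ρ) := min{ (1/2)·log₂(1 + β₁·SNR₁₁·(1−ρ²)), (1/2)·log₂(1 + β₁·SNR₁₁ + β₂·SNR₁₂ + 2ρ·√(β₁·SNR₁₁·β₂·SNR₁₂)) } over all (β₁,β₂,ρ) ∈ [0,1]³ satisfying 1 + SNR₂₁ + SNR₂₂ + 2·√((1−β₁)·SNR₂₁·(1−β₂)·SNR₂₂) + 2ρ·√(β₁·SNR₂₁·β₂·SNR₂₂)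 ≥ b equals (1/2)·log₂(1 + (1 − ξ(b)²)·SNR₁₁), and this supremum is attained (e.g. at β₁ = 1 − ξ(b)², β₂ = 0, ρ = 0). -/
open Real

/-- ξ(b): the minimum channel-input correlation required to achieve the
target energy rate b. -/
noncomputable def xi (SNR₂₁ SNR₂₂ b : ℝ) : ℝ :=
  max 0 (b - (1 + SNR₂₁ + SNR₂₂)) / (2 * Real.sqrt (SNR₂₁ * SNR₂₂))

/-- Transmitter 1's objective `f₁ᶠᴮ(β₁,β₂,ρ)` in the individual-rate
optimization problem with feedback. -/
noncomputable def f₁FB (SNR₁₁ SNR₁₂ β₁ β₂ ρ : ℝ) : ℝ :=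
  min
    ((1/2) * logb 2 (1 + β₁ * SNR₁₁ * (1 - ρ ^ 2)))
    ((1/2) * logb 2 (1 + β₁ * SNR₁₁ + β₂ * SNR₁₂ +
      2 * ρ * Real.sqrt (β₁ * SNR₁₁ * (β₂ * SNR₁₂))))

/-- The energy-rate constraint function `gᶠᴮ(β₁,β₂,ρ)` with feedback. -/
noncomputable def gFB (SNR₂₁ SNR₂₂ β₁ β₂ ρ : ℝ) : ℝ :=
  1 + SNR₂₁ + SNR₂₂ + 2 * Real.sqrt ((1 - β₁) * SNR₂₁ * ((1 - β₂) * SNR₂₂)) +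
    2 * ρ * Real.sqrt (β₁ * SNR₂₁ * (β₂ * SNR₂₂))

/-!
Rewriting the energy constraint in terms of the correlation between the two channel inputs
turns it into the requirement that this correlation be at least `ξ(b)`. By Cauchy–Schwarz, power
splits `β₁`, `β₂` and correlation `ρ` of the information-carrying signals give a squared input
correlation of at most `1 - β₁ (1 - ρ²)`, so the first term of the minimum defining the rate is
bounded by its value at `β₁ (1 - ρ²) = 1 - ξ(b)²`. Taking `ρ = 0` and `β₂ = 0` costs nothing: both
terms of the minimum then coincide, and the second transmitter spends all its power on the common
energy signal.
-/

theorem xi_nonneg (S T b : ℝ) : 0 ≤ xi S T b := by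
  unfold xi
  positivity

theorem xi_le_iff {S T b c : ℝ} (hST : 0 < S * T) (hc : 0 ≤ c) :
    xi S T b ≤ c ↔ b ≤ 1 + S + T + 2 * √(S * T) * c := by
  have hscale : 0 < 2 * √(S * T) := by positivity
  rw [xi, div_le_iff₀ hscale, max_le_iff, and_iff_right (by positivity), sub_le_iff_le_add',
    mul_comm c]

/-- The correlation between the two channel inputs when transmitter `i` spends the fraction `βᵢ`
of its power on information-carrying signals, which have correlation `ρ`, and the remaining power
on an energy-carrying signal common to both transmitters. Every input has unit power here; the
signal-to-noise ratios enter only when the correlation is turned into an energy rate. -/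
noncomputable def inputCorrelation (β₁ β₂ ρ : ℝ) : ℝ :=
  √((1 - β₁) * (1 - β₂)) + ρ * √(β₁ * β₂)

section InputCorrelation

variable {S T b c β₁ β₂ ρ : ℝ}

theorem inputCorrelation_nonneg (hρ : 0 ≤ ρ) : 0 ≤ inputCorrelation β₁ β₂ ρ := by
  unfold inputCorrelation
  positivity

theorem inputCorrelation_one_sub_sq_zero (hc : 0 ≤ c) :
    inputCorrelation (1 - c ^ 2) 0 ρ = c := by
  simp [inputCorrelation, sqrt_sq hc]

theorem sq_inputCorrelation_le (hβ₁ : β₁ ∈ Set.Icc (0 : ℝ) 1) (hβ₂ : β₂ ∈ Set.Icc (0 : ℝ) 1) :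
    inputCorrelation β₁ β₂ ρ ^ 2 ≤ 1 - β₁ * (1 - ρ ^ 2) := by
  have hβ₁' : 0 ≤ 1 - β₁ := sub_nonneg.2 hβ₁.2
  have hβ₂' : 0 ≤ 1 - β₂ := sub_nonneg.2 hβ₂.2
  calc inputCorrelation β₁ β₂ ρ ^ 2
      = (√(1 - β₁) * √(1 - β₂) + ρ * √β₁ * √β₂) ^ 2 := by
        rw [inputCorrelation, sqrt_mul hβ₁', sqrt_mul hβ₁.1, mul_assoc]
    _ ≤ (√(1 - β₁) ^ 2 + (ρ * √β₁) ^ 2) * (√(1 - β₂) ^ 2 + √β₂ ^ 2) := by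
        -- Cauchy–Schwarz: by Lagrange's identity, this square is the gap between the two sides.
        linarith [sq_nonneg (√(1 - β₁) * √β₂ - ρ * √β₁ * √(1 - β₂))]
    _ = 1 - β₁ * (1 - ρ ^ 2) := by
        rw [mul_pow, sq_sqrt hβ₁', sq_sqrt hβ₂', sq_sqrt hβ₁.1, sq_sqrt hβ₂.1]
        ring

theorem gFB_eq_inputCorrelation (hST : 0 ≤ S * T) :
    gFB S T β₁ β₂ ρ = 1 + S + T + 2 * √(S * T) * inputCorrelation β₁ β₂ ρ := by
  rw [gFB, inputCorrelation, mul_mul_mul_comm (1 - β₁), mul_mul_mul_comm β₁, sqrt_mul' _ hST,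
    sqrt_mul' _ hST]
  ring

theorem le_gFB_iff_xi_le_inputCorrelation (hST : 0 < S * T) (hρ : 0 ≤ ρ) :
    b ≤ gFB S T β₁ β₂ ρ ↔ xi S T b ≤ inputCorrelation β₁ β₂ ρ := by
  rw [gFB_eq_inputCorrelation hST.le, xi_le_iff hST (inputCorrelation_nonneg hρ)]

theorem f₁FB_le_of_le_inputCorrelation (hS : 0 ≤ S) (hβ₁ : β₁ ∈ Set.Icc (0 : ℝ) 1)
    (hβ₂ : β₂ ∈ Set.Icc (0 : ℝ) 1) (hρ : |ρ| ≤ 1) (hc : 0 ≤ c)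
    (hc_le : c ≤ inputCorrelation β₁ β₂ ρ) :
    f₁FB S T β₁ β₂ ρ ≤ (1 / 2) * logb 2 (1 + (1 - c ^ 2) * S) := by
  have hρ_sq : 0 ≤ 1 - ρ ^ 2 := sub_nonneg.2 ((sq_le_one_iff_abs_le_one ρ).2 hρ)
  have hpower : β₁ * (1 - ρ ^ 2) ≤ 1 - c ^ 2 :=
    le_sub_comm.1 ((pow_le_pow_left₀ hc hc_le 2).trans (sq_inputCorrelation_le hβ₁ hβ₂))
  have hβ₁_nonneg := hβ₁.1
  calc f₁FB S T β₁ β₂ ρ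
      ≤ (1 / 2) * logb 2 (1 + β₁ * S * (1 - ρ ^ 2)) := min_le_left _ _
    _ = (1 / 2) * logb 2 (1 + β₁ * (1 - ρ ^ 2) * S) := by rw [mul_right_comm β₁]
    _ ≤ (1 / 2) * logb 2 (1 + (1 - c ^ 2) * S) := by
        gcongr
        exact one_lt_two

end InputCorrelation

theorem f₁FB_zero_zero (S T β : ℝ) : f₁FB S T β 0 0 = (1 / 2) * logb 2 (1 + β * S) := by
  simp [f₁FB]

/-- Proposition 1: the maximum individual information rate of transmitter 1
in the G-MAC-F(b) is ½·log₂(1 + (1 − ξ(b)²)·SNR₁₁), attained at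
β₁ = 1 − ξ(b)², β₂ = 0, ρ = 0. -/
theorem max_individual_rate_feedback (SNR₁₁ SNR₁₂ SNR₂₁ SNR₂₂ : ℝ)
    (hS₁₁ : 0 < SNR₁₁) (hS₁₂ : 0 < SNR₁₂) (hS₂₁ : 0 < SNR₂₁) (hS₂₂ : 0 < SNR₂₂)
    (b : ℝ) (hb₀ : 0 ≤ b)
    (hb₁ : b ≤ 1 + SNR₂₁ + SNR₂₂ + 2 * Real.sqrt (SNR₂₁ * SNR₂₂)) :
    IsGreatest
      {r : ℝ | ∃ β₁ ∈ Set.Icc (0:ℝ) 1, ∃ β₂ ∈ Set.Icc (0:ℝ) 1,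
        ∃ ρ ∈ Set.Icc (0:ℝ) 1,
          gFB SNR₂₁ SNR₂₂ β₁ β₂ ρ ≥ b ∧ r = f₁FB SNR₁₁ SNR₁₂ β₁ β₂ ρ}
      ((1/2) * logb 2 (1 + (1 - xi SNR₂₁ SNR₂₂ b ^ 2) * SNR₁₁)) ∧
    gFB SNR₂₁ SNR₂₂ (1 - xi SNR₂₁ SNR₂₂ b ^ 2) 0 0 ≥ b ∧
    f₁FB SNR₁₁ SNR₁₂ (1 - xi SNR₂₁ SNR₂₂ b ^ 2) 0 0
      = (1/2) * logb 2 (1 + (1 - xi SNR₂₁ SNR₂₂ b ^ 2) * SNR₁₁) := by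
  have hS : 0 < SNR₂₁ * SNR₂₂ := mul_pos hS₂₁ hS₂₂
  have hξ₀ : 0 ≤ xi SNR₂₁ SNR₂₂ b := xi_nonneg _ _ _
  have hξ₁ : xi SNR₂₁ SNR₂₂ b ≤ 1 := (xi_le_iff hS zero_le_one).2 (by rwa [mul_one])
  have hβ : 1 - xi SNR₂₁ SNR₂₂ b ^ 2 ∈ Set.Icc (0 : ℝ) 1 :=
    ⟨sub_nonneg.2 (pow_le_one₀ hξ₀ hξ₁), sub_le_self _ (sq_nonneg _)⟩
  have h₀ : (0 : ℝ) ∈ Set.Icc (0 : ℝ) 1 := Set.left_mem_Icc.2 zero_le_one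
  have hg : gFB SNR₂₁ SNR₂₂ (1 - xi SNR₂₁ SNR₂₂ b ^ 2) 0 0 ≥ b :=
    (le_gFB_iff_xi_le_inputCorrelation hS le_rfl).2 (inputCorrelation_one_sub_sq_zero hξ₀).ge
  refine ⟨⟨⟨_, hβ, 0, h₀, 0, h₀, hg, (f₁FB_zero_zero _ _ _).symm⟩, ?_⟩, hg, f₁FB_zero_zero _ _ _⟩
  rintro _ ⟨β₁, hβ₁, β₂, hβ₂, ρ, ⟨hρ₀, hρ₁⟩, hb, rfl⟩
  exact f₁FB_le_of_le_inputCorrelation hS₁₁.le hβ₁ hβ₂ ((abs_of_nonneg hρ₀).trans_le hρ₁) hξ₀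
    ((le_gFB_iff_xi_le_inputCorrelation hS hρ₀).1 hb)
end

section
/- Maximum individual information rate without feedback (Proposition 2): for every real b with 0 ≤ b ≤ 1 + SNR₂₁ + SNR₂₂ + 2·√(SNR₂₁·SNR₂₂), the supremum of f₁(β₁,β₂) := min{ (1/2)·log₂(1 + β₁·SNR₁₁), (1/2)·log₂(1 + β₁·SNR₁₁ + β₂·SNR₁₂) } over all (β₁,β₂) ∈ [0,1]² satisfying g₀(β₁,β₂) ≥ b equals (1/2)·log₂(1 + (1 − ξ(b)²)·SNR₁₁), and this supremum is attained at β₁ = 1 − ξ(b)², β₂ = 0; in particular it coincides with the maximum individual information rate of the feedback case. -/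
open Real

/-- Transmitter 1's objective `f₁(β₁,β₂)` in the individual-rate
optimization problem without feedback. -/
noncomputable def f₁ (SNR₁₁ SNR₁₂ β₁ β₂ : ℝ) : ℝ :=
  min
    ((1/2) * logb 2 (1 + β₁ * SNR₁₁))
    ((1/2) * logb 2 (1 + β₁ * SNR₁₁ + β₂ * SNR₁₂))

/-- The energy-rate constraint function `g₀(β₁,β₂)` without feedback. -/
noncomputable def g₀ (SNR₂₁ SNR₂₂ β₁ β₂ : ℝ) : ℝ :=
  1 + SNR₂₁ + SNR₂₂ + 2 * Real.sqrt ((1 - β₁) * SNR₂₁ * ((1 - β₂) * SNR₂₂))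

/-! A power split `(β₁, β₂)` without feedback induces the input correlation
`ρ = √((1 - β₁) * (1 - β₂))`, and the energy constraint only sees `ρ`: it says `ξ(b) ≤ ρ`, that is
`ξ(b)² ≤ (1 - β₁) * (1 - β₂)`. The right-hand side is at most `1 - β₁`, so `β₁ ≤ 1 - ξ(b)²`, with
equality allowed when `β₂ = 0`. The rate is bounded by its first term, which increases with `β₁` and
is the whole rate at `β₂ = 0`. -/

/-- The energy rate delivered by channel inputs with correlation coefficient `ρ`, where `s = SNR₂₁`
and `t = SNR₂₂`. It separates the dependence of `g₀` on the correlation from the power split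
producing it; `ρ` is not restricted to `[0, 1]`. -/
noncomputable def energyRate (s t ρ : ℝ) : ℝ :=
  1 + s + t + 2 * (ρ * √(s * t))

theorem xi_nonneg_s4 (s t b : ℝ) : 0 ≤ xi s t b := by
  unfold xi
  positivity

section EnergyConstraint

variable {s t b β₁ β₂ : ℝ}

theorem xi_le_iff_le_energyRate (hst : 0 < s * t) {ρ : ℝ} (hρ : 0 ≤ ρ) :
    xi s t b ≤ ρ ↔ b ≤ energyRate s t ρ := by
  have hden : 0 < 2 * √(s * t) := mul_pos two_pos (Real.sqrt_pos.2 hst)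
  have hρ_mul : 0 ≤ ρ * (2 * √(s * t)) := mul_nonneg hρ hden.le
  rw [xi, div_le_iff₀ hden, max_le_iff, and_iff_right hρ_mul, energyRate,
    sub_le_iff_le_add', mul_left_comm]

theorem g₀_eq_energyRate (hβ : 0 ≤ (1 - β₁) * (1 - β₂)) :
    g₀ s t β₁ β₂ = energyRate s t √((1 - β₁) * (1 - β₂)) := by
  rw [g₀, energyRate, ← Real.sqrt_mul hβ, mul_mul_mul_comm]

theorem le_g₀_iff_xi_sq_le (hst : 0 < s * t) (hβ : 0 ≤ (1 - β₁) * (1 - β₂)) :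
    b ≤ g₀ s t β₁ β₂ ↔ xi s t b ^ 2 ≤ (1 - β₁) * (1 - β₂) := by
  rw [g₀_eq_energyRate hβ, ← xi_le_iff_le_energyRate hst (Real.sqrt_nonneg _),
    Real.le_sqrt (xi_nonneg_s4 s t b) hβ]

theorem le_g₀_one_sub_xi_sq_zero (hst : 0 < s * t) (b : ℝ) :
    b ≤ g₀ s t (1 - xi s t b ^ 2) 0 := by
  have hprod : (1 - (1 - xi s t b ^ 2)) * (1 - 0) = xi s t b ^ 2 := by ring
  have hprod_nonneg : 0 ≤ (1 - (1 - xi s t b ^ 2)) * (1 - 0) := (sq_nonneg _).trans hprod.ge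
  exact (le_g₀_iff_xi_sq_le hst hprod_nonneg).2 hprod.ge

theorem le_one_sub_xi_sq_of_le_g₀ (hst : 0 < s * t) (hβ₁ : β₁ ≤ 1) (hβ₂ : β₂ ∈ Set.Icc 0 1)
    (hb : b ≤ g₀ s t β₁ β₂) : β₁ ≤ 1 - xi s t b ^ 2 := by
  have h₁ : 0 ≤ 1 - β₁ := sub_nonneg.2 hβ₁
  have h₂ : 0 ≤ 1 - β₂ := sub_nonneg.2 hβ₂.2
  have hxi : xi s t b ^ 2 ≤ 1 - β₁ := calc
    xi s t b ^ 2 ≤ (1 - β₁) * (1 - β₂) := (le_g₀_iff_xi_sq_le hst (mul_nonneg h₁ h₂)).1 hb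
    _ ≤ 1 - β₁ := mul_le_of_le_one_right h₁ (sub_le_self 1 hβ₂.1)
  exact le_sub_comm.1 hxi

theorem one_sub_xi_sq_mem_Icc (hst : 0 < s * t) (hb : b ≤ energyRate s t 1) :
    1 - xi s t b ^ 2 ∈ Set.Icc 0 1 := by
  have hxi : xi s t b ≤ 1 := (xi_le_iff_le_energyRate hst zero_le_one).2 hb
  exact ⟨sub_nonneg.2 (pow_le_one₀ (xi_nonneg_s4 s t b) hxi), sub_le_self 1 (sq_nonneg _)⟩

end EnergyConstraint

theorem f₁_zero_right (p q β : ℝ) : f₁ p q β 0 = (1 / 2) * logb 2 (1 + β * p) := by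
  rw [f₁, zero_mul, add_zero, min_self]

theorem f₁_le_of_le {p β₁ β : ℝ} (hp : 0 ≤ p) (hβ₁ : 0 ≤ β₁) (hβ : β₁ ≤ β) (q β₂ : ℝ) :
    f₁ p q β₁ β₂ ≤ (1 / 2) * logb 2 (1 + β * p) := calc
  f₁ p q β₁ β₂ ≤ (1 / 2) * logb 2 (1 + β₁ * p) := min_le_left _ _
  _ ≤ (1 / 2) * logb 2 (1 + β * p) := by
    gcongr
    exact one_lt_two

/-- Proposition 2: the maximum individual information rate of transmitter 1
in the G-MAC(b) is ½·log₂(1 + (1 − ξ(b)²)·SNR₁₁), attained at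
β₁ = 1 − ξ(b)², β₂ = 0; in particular it coincides with the maximum
individual information rate of the feedback case. -/
theorem max_individual_rate_no_feedback (SNR₁₁ SNR₁₂ SNR₂₁ SNR₂₂ : ℝ)
    (hS₁₁ : 0 < SNR₁₁) (hS₁₂ : 0 < SNR₁₂) (hS₂₁ : 0 < SNR₂₁) (hS₂₂ : 0 < SNR₂₂)
    (b : ℝ) (hb₀ : 0 ≤ b)
    (hb₁ : b ≤ 1 + SNR₂₁ + SNR₂₂ + 2 * Real.sqrt (SNR₂₁ * SNR₂₂)) :
    IsGreatest
      {r : ℝ | ∃ β₁ ∈ Set.Icc (0:ℝ) 1, ∃ β₂ ∈ Set.Icc (0:ℝ) 1,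
          g₀ SNR₂₁ SNR₂₂ β₁ β₂ ≥ b ∧ r = f₁ SNR₁₁ SNR₁₂ β₁ β₂}
      ((1/2) * logb 2 (1 + (1 - xi SNR₂₁ SNR₂₂ b ^ 2) * SNR₁₁)) ∧
    g₀ SNR₂₁ SNR₂₂ (1 - xi SNR₂₁ SNR₂₂ b ^ 2) 0 ≥ b ∧
    f₁ SNR₁₁ SNR₁₂ (1 - xi SNR₂₁ SNR₂₂ b ^ 2) 0
      = (1/2) * logb 2 (1 + (1 - xi SNR₂₁ SNR₂₂ b ^ 2) * SNR₁₁) := by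
  have hst : 0 < SNR₂₁ * SNR₂₂ := mul_pos hS₂₁ hS₂₂
  have hb : b ≤ energyRate SNR₂₁ SNR₂₂ 1 := by rwa [energyRate, one_mul]
  have hfeasible := le_g₀_one_sub_xi_sq_zero hst b
  have hrate := f₁_zero_right SNR₁₁ SNR₁₂ (1 - xi SNR₂₁ SNR₂₂ b ^ 2)
  refine ⟨⟨?attained, ?upper_bound⟩, hfeasible, hrate⟩
  case attained =>
    exact ⟨_, one_sub_xi_sq_mem_Icc hst hb, 0, Set.left_mem_Icc.2 zero_le_one, hfeasible,
      hrate.symm⟩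
  case upper_bound =>
    rintro _ ⟨β₁, hβ₁, β₂, hβ₂, hg, rfl⟩
    exact f₁_le_of_le hS₁₁.le hβ₁.1 (le_one_sub_xi_sq_of_le_g₀ hst hβ₁.2 hβ₂ hg) SNR₁₂ β₂
end

section
/- Feedback sum-capacity, low-energy regime (Proposition 3, case 1): for every real b with 0 ≤ b ≤ 1 + SNR₂₁ + SNR₂₂ + 2·ρ⋆(1,1)·√(SNR₂₁·SNR₂₂), the supremum of f(β₁,β₂,ρ) over all (β₁,β₂,ρ) ∈ [0,1]³ satisfying g(β₁,β₂,ρ) ≥ b equals (1/2)·log₂(1 + SNR₁₁ + SNR₁₂ + 2·ρ⋆(1,1)·√(SNR₁₁·SNR₁₂)), attained at (β₁,β₂,ρ) = (1,1,ρ⋆(1,1)). -/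
open Real

/-- The feedback energy-rate constraint function `g(β₁,β₂,ρ)`. -/
noncomputable def g (SNR₂₁ SNR₂₂ β₁ β₂ ρ : ℝ) : ℝ :=
  1 + SNR₂₁ + SNR₂₂ +
    2 * (ρ * Real.sqrt (β₁ * β₂) + Real.sqrt ((1 - β₁) * (1 - β₂))) *
      Real.sqrt (SNR₂₁ * SNR₂₂)

/-!
Correlation between the channel inputs raises the joint bound on the sum rate and lowers the
sum of the individual bounds, so the smaller of the two is largest where they cross. Both grow
with the received powers, hence the maximum is at `β₁ = β₂ = 1`. The energy rate there is the upper
limit of the low-energy regime, so the energy constraint does not bind.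
-/

/-- The cut-set bound on `R₁ + R₂` in Ozarow's capacity region of the Gaussian multiple access
channel with feedback, for received signal-to-noise ratios `S₁`, `S₂` and input correlation `ρ`. -/
noncomputable def jointRateBound (S₁ S₂ ρ : ℝ) : ℝ :=
  1 / 2 * logb 2 (1 + S₁ + S₂ + 2 * ρ * √(S₁ * S₂))

/-- The sum of the bounds `½·log₂(1 + Sᵢ(1 - ρ²))` on `R₁` and `R₂` in the same region, written as
one logarithm to agree with `f`. -/
noncomputable def individualRateBound (S₁ S₂ ρ : ℝ) : ℝ :=
  1 / 2 * logb 2 ((1 + S₁ * (1 - ρ ^ 2)) * (1 + S₂ * (1 - ρ ^ 2)))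

section RateBounds

variable {S₁ S₂ T₁ T₂ ρ r : ℝ}

theorem jointRateBound_le_jointRateBound (hS₁ : 0 ≤ S₁) (hS₂ : 0 ≤ S₂) (hρ : 0 ≤ ρ)
    (h₁ : S₁ ≤ T₁) (h₂ : S₂ ≤ T₂) (hρr : ρ ≤ r) :
    jointRateBound S₁ S₂ ρ ≤ jointRateBound T₁ T₂ r := by
  have hT₁ : 0 ≤ T₁ := hS₁.trans h₁
  have hr : 0 ≤ r := hρ.trans hρr
  unfold jointRateBound
  gcongr
  exact one_lt_two

theorem individualRateBound_le_individualRateBound (hS₁ : 0 ≤ S₁) (hS₂ : 0 ≤ S₂)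
    (hρ : ρ ^ 2 ≤ 1) (h₁ : S₁ ≤ T₁) (h₂ : S₂ ≤ T₂) (hrρ : r ^ 2 ≤ ρ ^ 2) :
    individualRateBound S₁ S₂ ρ ≤ individualRateBound T₁ T₂ r := by
  have hT₁ : 0 ≤ T₁ := hS₁.trans h₁
  have hT₂ : 0 ≤ T₂ := hS₂.trans h₂
  have hr : 0 ≤ 1 - r ^ 2 := sub_nonneg.2 (hrρ.trans hρ)
  unfold individualRateBound
  gcongr
  exact one_lt_two

theorem min_rateBound_le_of_crossing (hS₁ : 0 ≤ S₁) (hS₂ : 0 ≤ S₂) (h₁ : S₁ ≤ T₁) (h₂ : S₂ ≤ T₂)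
    (hρ : ρ ∈ Set.Icc (0 : ℝ) 1) (hr : 0 ≤ r)
    (hcross : jointRateBound T₁ T₂ r = individualRateBound T₁ T₂ r) :
    min (jointRateBound S₁ S₂ ρ) (individualRateBound S₁ S₂ ρ) ≤ jointRateBound T₁ T₂ r := by
  rcases le_total ρ r with hρr | hrρ
  · exact min_le_of_left_le <|
      jointRateBound_le_jointRateBound hS₁ hS₂ hρ.1 h₁ h₂ hρr
  · rw [hcross]
    exact min_le_of_right_le <|
      individualRateBound_le_individualRateBound hS₁ hS₂ (pow_le_one₀ hρ.1 hρ.2) h₁ h₂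
        (pow_le_pow_left₀ hr hrρ 2)

end RateBounds

theorem f_eq_min_rateBound (SNR₁₁ SNR₁₂ β₁ β₂ ρ : ℝ) :
    f SNR₁₁ SNR₁₂ β₁ β₂ ρ =
      min (jointRateBound (β₁ * SNR₁₁) (β₂ * SNR₁₂) ρ)
        (individualRateBound (β₁ * SNR₁₁) (β₂ * SNR₁₂) ρ) :=
  rfl

theorem g_one_one (SNR₂₁ SNR₂₂ ρ : ℝ) :
    g SNR₂₁ SNR₂₂ 1 1 ρ = 1 + SNR₂₁ + SNR₂₂ + 2 * ρ * √(SNR₂₁ * SNR₂₂) := by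
  simp [g]

/-- Proposition 3, case 1: for 0 ≤ b ≤ 1 + SNR₂₁ + SNR₂₂ + 2·ρ⋆(1,1)·√(SNR₂₁·SNR₂₂),
the feedback information sum-capacity is
½·log₂(1 + SNR₁₁ + SNR₁₂ + 2·ρ⋆(1,1)·√(SNR₁₁·SNR₁₂)), attained at (1,1,ρ⋆(1,1)). -/
theorem sum_capacity_feedback_low_energy (SNR₁₁ SNR₁₂ SNR₂₁ SNR₂₂ : ℝ)
    (hS₁₁ : 0 < SNR₁₁) (hS₁₂ : 0 < SNR₁₂) (hS₂₁ : 0 < SNR₂₁) (hS₂₂ : 0 < SNR₂₂)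
    (ρs : ℝ) (hρs : ρs ∈ Set.Ioo (0:ℝ) 1)
    (hρseq : 1 + SNR₁₁ + SNR₁₂ + 2 * ρs * Real.sqrt (SNR₁₁ * SNR₁₂)
      = (1 + SNR₁₁ * (1 - ρs ^ 2)) * (1 + SNR₁₂ * (1 - ρs ^ 2)))
    (b : ℝ) (hb₀ : 0 ≤ b)
    (hb₁ : b ≤ 1 + SNR₂₁ + SNR₂₂ + 2 * ρs * Real.sqrt (SNR₂₁ * SNR₂₂)) :
    IsGreatest
      {r : ℝ | ∃ β₁ ∈ Set.Icc (0:ℝ) 1, ∃ β₂ ∈ Set.Icc (0:ℝ) 1,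
        ∃ ρ ∈ Set.Icc (0:ℝ) 1,
          g SNR₂₁ SNR₂₂ β₁ β₂ ρ ≥ b ∧ r = f SNR₁₁ SNR₁₂ β₁ β₂ ρ}
      ((1/2) * logb 2 (1 + SNR₁₁ + SNR₁₂ + 2 * ρs * Real.sqrt (SNR₁₁ * SNR₁₂))) ∧
    g SNR₂₁ SNR₂₂ 1 1 ρs ≥ b ∧
    f SNR₁₁ SNR₁₂ 1 1 ρs
      = (1/2) * logb 2 (1 + SNR₁₁ + SNR₁₂ + 2 * ρs * Real.sqrt (SNR₁₁ * SNR₁₂)) := by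
  have hcross : jointRateBound SNR₁₁ SNR₁₂ ρs = individualRateBound SNR₁₁ SNR₁₂ ρs :=
    congrArg (fun x ↦ 1 / 2 * logb 2 x) hρseq
  have hfeasible : g SNR₂₁ SNR₂₂ 1 1 ρs ≥ b := hb₁.trans_eq (g_one_one _ _ _).symm
  have hvalue : f SNR₁₁ SNR₁₂ 1 1 ρs = jointRateBound SNR₁₁ SNR₁₂ ρs := by
    rw [f_eq_min_rateBound, one_mul, one_mul, ← hcross, min_self]
  have hone : (1 : ℝ) ∈ Set.Icc (0 : ℝ) 1 := Set.right_mem_Icc.2 zero_le_one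
  refine ⟨⟨⟨1, hone, 1, hone, ρs, Set.Ioo_subset_Icc_self hρs, hfeasible, hvalue.symm⟩, ?_⟩,
    hfeasible, hvalue⟩
  rintro _ ⟨β₁, hβ₁, β₂, hβ₂, ρ, hρ, -, rfl⟩
  exact min_rateBound_le_of_crossing (mul_nonneg hβ₁.1 hS₁₁.le) (mul_nonneg hβ₂.1 hS₁₂.le)
    (mul_le_of_le_one_left hS₁₁.le hβ₁.2) (mul_le_of_le_one_left hS₁₂.le hβ₂.2) hρ hρs.1.le hcross
end

section
/- Structure of the optimal correlation (Lemma in Appendix F): let b satisfy 0 ≤ b ≤ 1 + SNR₂₁ + SNR₂₂ + 2·√(SNR₂₁·SNR₂₂). If (β₁,β₂,ρ) ∈ (0,1]² × [0,1] satisfies g(β₁,β₂,ρ) ≥ b and f(β₁,β₂,ρ) ≥ f(β₁′,β₂′,ρ′) for every (β₁′,β₂′,ρ′) ∈ [0,1]³ with g(β₁′,β₂′,ρ′) ≥ b, then ρ = max{ ρ_min(β₁,β₂), ρ⋆(β₁,β₂) }. -/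
/-!
For a fixed power split, `f` is the minimum of a rate that strictly increases with the correlation
and one that strictly decreases with it, so it rises up to their crossing point `ρ⋆` and falls
afterwards. Since `g` is increasing and affine in `ρ`, the energy constraint cuts out the
correlations `ρ ≥ ρ_min`, and a strictly unimodal function restricted to `ρ ≥ ρ_min` peaks only at
`max ρ_min ρ⋆`.
-/

open Real

/-- ρ_min(β₁,β₂): the smallest feasible correlation for the power split
(β₁,β₂) and energy rate b. -/
noncomputable def rhoMin (SNR₂₁ SNR₂₂ b β₁ β₂ : ℝ) : ℝ :=
  min 1
    (max 0 (b - (1 + SNR₂₁ + SNR₂₂ +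
        2 * Real.sqrt ((1 - β₁) * SNR₂₁ * ((1 - β₂) * SNR₂₂)))) /
      (2 * Real.sqrt (β₁ * SNR₂₁ * (β₂ * SNR₂₂))))

section Unimodal

open Set

variable {α β : Type*} [LinearOrder α] {S : Set α} {c : α}

section MinOfCrossing

variable [LinearOrder β] {u v : α → β}

lemma strictMonoOn_min_of_crossing (hu : StrictMonoOn u S) (hv : AntitoneOn v S) (hc : c ∈ S)
    (huv : u c = v c) : StrictMonoOn (fun x ↦ min (u x) (v x)) (S ∩ Iic c) := by
  refine (hu.mono inter_subset_left).congr fun x hx ↦ (min_eq_left ?_).symm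
  calc u x ≤ u c := hu.monotoneOn hx.1 hc hx.2
    _ = v c := huv
    _ ≤ v x := hv hx.1 hc hx.2

lemma strictAntiOn_min_of_crossing (hu : MonotoneOn u S) (hv : StrictAntiOn v S) (hc : c ∈ S)
    (huv : u c = v c) : StrictAntiOn (fun x ↦ min (u x) (v x)) (S ∩ Ici c) := by
  refine (hv.mono inter_subset_left).congr fun x hx ↦ (min_eq_right ?_).symm
  calc v x ≤ v c := hv.antitoneOn hc hx.1 hx.2
    _ = u c := huv.symm
    _ ≤ u x := hu hc hx.1 hx.2

end MinOfCrossing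

lemma eq_max_of_isMaxOn_inter_Ici [Preorder β] {h : α → β} {m x : α}
    (hmono : StrictMonoOn h (S ∩ Iic c)) (hanti : StrictAntiOn h (S ∩ Ici c))
    (hc : c ∈ S) (hm : m ∈ S) (hx : x ∈ S ∩ Ici m) (hmax : IsMaxOn h (S ∩ Ici m) x) :
    x = max m c := by
  have hpeak : max m c ∈ S := max_rec' (· ∈ S) hm hc
  refine le_antisymm (not_lt.1 fun hlt ↦ ?_) (max_le hx.2 (not_lt.1 fun hlt ↦ ?_))
  · have hcx : c ≤ x := (le_max_right m c).trans hlt.le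
    exact (hmax ⟨hpeak, le_max_left m c⟩).not_gt
      (hanti ⟨hpeak, le_max_right m c⟩ ⟨hx.1, hcx⟩ hlt)
  · have hmc : m ≤ c := le_trans hx.2 hlt.le
    exact (hmax ⟨hc, hmc⟩).not_gt (hmono ⟨hx.1, hlt.le⟩ ⟨hc, le_rfl⟩ hlt)

end Unimodal

section Rates

open Set

/-- Joint-decoding bound on the sum rate, for received signal-to-noise ratios `A`, `B` and
correlation `ρ`; with `A = β₁ * SNR₁₁` and `B = β₂ * SNR₁₂` it is the first term of `f`. -/
noncomputable def jointRate (A B ρ : ℝ) : ℝ :=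
  (1 / 2) * logb 2 (1 + A + B + 2 * ρ * √(A * B))

/-- Sum of the two individual rate bounds, for received signal-to-noise ratios `A`, `B` and
correlation `ρ`; with `A = β₁ * SNR₁₁` and `B = β₂ * SNR₁₂` it is the second term of `f`. -/
noncomputable def individualRateSum (A B ρ : ℝ) : ℝ :=
  (1 / 2) * logb 2 ((1 + A * (1 - ρ ^ 2)) * (1 + B * (1 - ρ ^ 2)))

variable {A B : ℝ}

lemma jointRate_strictMonoOn (hA : 0 < A) (hB : 0 < B) :
    StrictMonoOn (jointRate A B) (Ici 0) := by
  intro x (hx : 0 ≤ x) y _ hxy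
  have hlt : 1 + A + B + 2 * x * √(A * B) < 1 + A + B + 2 * y * √(A * B) := by gcongr
  exact mul_lt_mul_of_pos_left (logb_lt_logb one_lt_two (by positivity) hlt) one_half_pos

lemma individualRateSum_strictAntiOn (hA : 0 < A) (hB : 0 < B) :
    StrictAntiOn (individualRateSum A B) (Icc 0 1) := by
  intro x hx y hy hxy
  have hsq : x ^ 2 < y ^ 2 := pow_lt_pow_left₀ hxy hx.1 two_ne_zero
  have hy_var : 0 ≤ 1 - y ^ 2 := sub_nonneg.2 (pow_le_one₀ hy.1 hy.2)
  have hlt : (1 + A * (1 - y ^ 2)) * (1 + B * (1 - y ^ 2)) <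
      (1 + A * (1 - x ^ 2)) * (1 + B * (1 - x ^ 2)) := by gcongr
  exact mul_lt_mul_of_pos_left (logb_lt_logb one_lt_two (by positivity) hlt) one_half_pos

lemma f_eq_min (SNR₁₁ SNR₁₂ β₁ β₂ : ℝ) :
    f SNR₁₁ SNR₁₂ β₁ β₂ = fun ρ ↦ min (jointRate (β₁ * SNR₁₁) (β₂ * SNR₁₂) ρ)
      (individualRateSum (β₁ * SNR₁₁) (β₂ * SNR₁₂) ρ) :=
  rfl

end Rates

section EnergyConstraint

open Set

variable {SNR₂₁ SNR₂₂ b β₁ β₂ ρ : ℝ}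

lemma g_eq_add_mul (hβ₁ : β₁ ∈ Icc (0 : ℝ) 1) (hβ₂ : β₂ ∈ Icc (0 : ℝ) 1) :
    g SNR₂₁ SNR₂₂ β₁ β₂ ρ =
      1 + SNR₂₁ + SNR₂₂ + 2 * √((1 - β₁) * SNR₂₁ * ((1 - β₂) * SNR₂₂)) +
        ρ * (2 * √(β₁ * SNR₂₁ * (β₂ * SNR₂₂))) := by
  rw [g, mul_mul_mul_comm (1 - β₁), mul_mul_mul_comm β₁, sqrt_mul (mul_nonneg hβ₁.1 hβ₂.1),
    sqrt_mul (mul_nonneg (sub_nonneg.2 hβ₁.2) (sub_nonneg.2 hβ₂.2))]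
  ring

lemma g_monotone (SNR₂₁ SNR₂₂ β₁ β₂ : ℝ) : Monotone (g SNR₂₁ SNR₂₂ β₁ β₂) := by
  intro ρ ρ' hρ
  unfold g
  gcongr

lemma rhoMin_mem_Icc (SNR₂₁ SNR₂₂ b β₁ β₂ : ℝ) :
    rhoMin SNR₂₁ SNR₂₂ b β₁ β₂ ∈ Icc (0 : ℝ) 1 :=
  ⟨le_min zero_le_one (div_nonneg (le_max_left _ _) (by positivity)), min_le_left _ _⟩

lemma le_g_iff_rhoMin_le (hS₂₁ : 0 < SNR₂₁) (hS₂₂ : 0 < SNR₂₂)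
    (hβ₁ : β₁ ∈ Ioc (0 : ℝ) 1) (hβ₂ : β₂ ∈ Ioc (0 : ℝ) 1)
    (hone : b ≤ g SNR₂₁ SNR₂₂ β₁ β₂ 1) (hρ : 0 ≤ ρ) :
    b ≤ g SNR₂₁ SNR₂₂ β₁ β₂ ρ ↔ rhoMin SNR₂₁ SNR₂₂ b β₁ β₂ ≤ ρ := by
  have hslope : 0 < 2 * √(β₁ * SNR₂₁ * (β₂ * SNR₂₂)) := by
    have := hβ₁.1
    have := hβ₂.1
    positivity
  have hiff {r : ℝ} (hr : 0 ≤ r) : b ≤ g SNR₂₁ SNR₂₂ β₁ β₂ r ↔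
      max 0 (b - (1 + SNR₂₁ + SNR₂₂ + 2 * √((1 - β₁) * SNR₂₁ * ((1 - β₂) * SNR₂₂)))) /
        (2 * √(β₁ * SNR₂₁ * (β₂ * SNR₂₂))) ≤ r := by
    rw [g_eq_add_mul (Ioc_subset_Icc_self hβ₁) (Ioc_subset_Icc_self hβ₂), div_le_iff₀ hslope,
      max_le_iff, and_iff_right (mul_nonneg hr hslope.le), sub_le_iff_le_add']
  rw [rhoMin, min_eq_right ((hiff zero_le_one).1 hone)]
  exact hiff hρ

lemma setOf_le_g_eq_inter_Ici_rhoMin (hS₂₁ : 0 < SNR₂₁) (hS₂₂ : 0 < SNR₂₂)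
    (hβ₁ : β₁ ∈ Ioc (0 : ℝ) 1) (hβ₂ : β₂ ∈ Ioc (0 : ℝ) 1) (hone : b ≤ g SNR₂₁ SNR₂₂ β₁ β₂ 1) :
    {ρ ∈ Icc (0 : ℝ) 1 | b ≤ g SNR₂₁ SNR₂₂ β₁ β₂ ρ} =
      Icc 0 1 ∩ Ici (rhoMin SNR₂₁ SNR₂₂ b β₁ β₂) :=
  ext fun _ ↦ and_congr_right fun hρ ↦ le_g_iff_rhoMin_le hS₂₁ hS₂₂ hβ₁ hβ₂ hone hρ.1

end EnergyConstraint

theorem optimal_correlation_structure_general {SNR₁₁ SNR₁₂ SNR₂₁ SNR₂₂ b β₁ β₂ ρ ρs : ℝ}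
    (hS₁₁ : 0 < SNR₁₁) (hS₁₂ : 0 < SNR₁₂) (hS₂₁ : 0 < SNR₂₁) (hS₂₂ : 0 < SNR₂₂)
    (hβ₁ : β₁ ∈ Set.Ioc (0 : ℝ) 1) (hβ₂ : β₂ ∈ Set.Ioc (0 : ℝ) 1) (hρs : ρs ∈ Set.Icc (0 : ℝ) 1)
    (hρseq : 1 + β₁ * SNR₁₁ + β₂ * SNR₁₂ + 2 * ρs * √(β₁ * SNR₁₁ * (β₂ * SNR₁₂))
      = (1 + β₁ * SNR₁₁ * (1 - ρs ^ 2)) * (1 + β₂ * SNR₁₂ * (1 - ρs ^ 2)))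
    (hρ : ρ ∈ {ρ' ∈ Set.Icc (0 : ℝ) 1 | b ≤ g SNR₂₁ SNR₂₂ β₁ β₂ ρ'})
    (hopt : IsMaxOn (f SNR₁₁ SNR₁₂ β₁ β₂)
      {ρ' ∈ Set.Icc (0 : ℝ) 1 | b ≤ g SNR₂₁ SNR₂₂ β₁ β₂ ρ'} ρ) :
    ρ = max (rhoMin SNR₂₁ SNR₂₂ b β₁ β₂) ρs := by
  have hA : 0 < β₁ * SNR₁₁ := mul_pos hβ₁.1 hS₁₁
  have hB : 0 < β₂ * SNR₁₂ := mul_pos hβ₂.1 hS₁₂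
  have hinc : StrictMonoOn (jointRate (β₁ * SNR₁₁) (β₂ * SNR₁₂)) (Set.Icc 0 1) :=
    (jointRate_strictMonoOn hA hB).mono Set.Icc_subset_Ici_self
  have hdec := individualRateSum_strictAntiOn hA hB
  have hcross : jointRate (β₁ * SNR₁₁) (β₂ * SNR₁₂) ρs =
      individualRateSum (β₁ * SNR₁₁) (β₂ * SNR₁₂) ρs := by
    rw [jointRate, hρseq, individualRateSum]
  have hone : b ≤ g SNR₂₁ SNR₂₂ β₁ β₂ 1 := hρ.2.trans (g_monotone _ _ _ _ hρ.1.2)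
  rw [setOf_le_g_eq_inter_Ici_rhoMin hS₂₁ hS₂₂ hβ₁ hβ₂ hone] at hρ hopt
  rw [f_eq_min] at hopt
  exact eq_max_of_isMaxOn_inter_Ici
    (strictMonoOn_min_of_crossing hinc hdec.antitoneOn hρs hcross)
    (strictAntiOn_min_of_crossing hinc.monotoneOn hdec hρs hcross)
    hρs (rhoMin_mem_Icc _ _ _ _ _) hρ hopt

/-- Lemma 1 of Appendix F: any maximizer (β₁,β₂,ρ) of the feedback
sum-rate optimization problem with β₁,β₂ > 0 satisfies
ρ = max{ρ_min(β₁,β₂), ρ⋆(β₁,β₂)}. -/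
theorem optimal_correlation_structure (SNR₁₁ SNR₁₂ SNR₂₁ SNR₂₂ : ℝ)
    (hS₁₁ : 0 < SNR₁₁) (hS₁₂ : 0 < SNR₁₂) (hS₂₁ : 0 < SNR₂₁) (hS₂₂ : 0 < SNR₂₂)
    (b : ℝ) (hb₀ : 0 ≤ b)
    (hb₁ : b ≤ 1 + SNR₂₁ + SNR₂₂ + 2 * Real.sqrt (SNR₂₁ * SNR₂₂))
    (β₁ β₂ ρ : ℝ) (hβ₁ : β₁ ∈ Set.Ioc (0:ℝ) 1) (hβ₂ : β₂ ∈ Set.Ioc (0:ℝ) 1)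
    (hρ : ρ ∈ Set.Icc (0:ℝ) 1)
    (ρs : ℝ) (hρs : ρs ∈ Set.Ioo (0:ℝ) 1)
    (hρseq : 1 + β₁ * SNR₁₁ + β₂ * SNR₁₂ +
        2 * ρs * Real.sqrt (β₁ * SNR₁₁ * (β₂ * SNR₁₂))
      = (1 + β₁ * SNR₁₁ * (1 - ρs ^ 2)) * (1 + β₂ * SNR₁₂ * (1 - ρs ^ 2)))
    (hfeas : g SNR₂₁ SNR₂₂ β₁ β₂ ρ ≥ b)
    (hopt : ∀ β₁' ∈ Set.Icc (0:ℝ) 1, ∀ β₂' ∈ Set.Icc (0:ℝ) 1,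
      ∀ ρ' ∈ Set.Icc (0:ℝ) 1, g SNR₂₁ SNR₂₂ β₁' β₂' ρ' ≥ b →
        f SNR₁₁ SNR₁₂ β₁' β₂' ρ' ≤ f SNR₁₁ SNR₁₂ β₁ β₂ ρ) :
    ρ = max (rhoMin SNR₂₁ SNR₂₂ b β₁ β₂) ρs := by
  exact optimal_correlation_structure_general hS₁₁ hS₁₂ hS₂₁ hS₂₂ hβ₁ hβ₂
    (Set.Ioo_subset_Icc_self hρs) hρseq ⟨hρ, hfeas⟩ fun ρ' hρ' ↦
      hopt β₁ (Set.Ioc_subset_Icc_self hβ₁) β₂ (Set.Ioc_subset_Icc_self hβ₂) ρ' hρ'.1 hρ'.2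
end

section
/- Uniqueness of the feedback sum-rate maximizer (Lemma in Appendix F): let b satisfy 0 ≤ b < 1 + SNR₂₁ + SNR₂₂ + 2·√(SNR₂₁·SNR₂₂), and let ρ̄ := max{ ρ_min(1,1), ρ⋆(1,1) }. Then (1,1,ρ̄) satisfies g(1,1,ρ̄) ≥ b, and for every (β₁,β₂,ρ) ∈ [0,1]³ with g(β₁,β₂,ρ) ≥ b and (β₁,β₂,ρ) ≠ (1,1,ρ̄) one has f(β₁,β₂,ρ) < f(1,1,ρ̄); that is, (1,1,ρ̄) is the unique maximizer of f over the feasible set { (β₁,β₂,ρ) ∈ [0,1]³ : g(β₁,β₂,ρ) ≥ b }. -/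
open Real

/-!
At full power the joint term of `f` increases with `ρ` and the product term decreases; they cross
at `ρ⋆`, so for every `ρ ≥ ρ⋆` the value `f(1,1,ρ)` is given by the product term. Put
`t = ρ√(β₁β₂) + √((1-β₁)(1-β₂))`. The energy constraint says exactly `ρ_min(1,1) ≤ t`, and by
Cauchy-Schwarz `t² ≤ 1 - βᵢ(1 - ρ²)`: collecting energy costs each user innovation power, no matter
how the powers are split. Equality for both users forces `β₁ = β₂ = β`, and the gap
`1 - β(1 - ρ²) - t² = β(1 - β)(1 - ρ)²` then forces `β = 1`. Hence, if `ρ_min(1,1)` exceeds `ρ⋆`,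
the product term is largest at `(1,1,ρ_min(1,1))` only. Otherwise a competitor loses to `(1,1,ρ⋆)`
in the joint term if `ρ ≤ ρ⋆` and in the product term if `ρ > ρ⋆`.
-/

/-- The argument of the first logarithm of `f`, in terms of the received signal-to-noise ratios
`u` and `v`: one plus the signal-to-noise ratio of the superposition of two signals with
correlation `ρ`. -/
noncomputable def jointSNR (u v ρ : ℝ) : ℝ :=
  1 + u + v + 2 * ρ * √(u * v)

/-- The argument of the second logarithm of `f`, in terms of the received signal-to-noise ratios
`u` and `v`: the product of the single-user terms, in which only the fraction `1 - ρ ^ 2` of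
each power that is not explained by the other signal counts. -/
noncomputable def innovationSNRProd (u v ρ : ℝ) : ℝ :=
  (1 + u * (1 - ρ ^ 2)) * (1 + v * (1 - ρ ^ 2))

/-- The correlation between the total transmitted signals, as seen by the energy harvester, when
fractions `x` and `y` of the powers carry information with correlation `ρ` and the remainder is
common to both transmitters. -/
noncomputable def totalCorrelation (x y ρ : ℝ) : ℝ :=
  ρ * √(x * y) + √((1 - x) * (1 - y))

section Monotonicity

variable {u v u' v' ρ ρ' : ℝ}

lemma jointSNR_pos (hu : 0 ≤ u) (hv : 0 ≤ v) (hρ : 0 ≤ ρ) : 0 < jointSNR u v ρ := by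
  unfold jointSNR
  positivity

lemma innovationSNRProd_pos (hu : 0 ≤ u) (hv : 0 ≤ v) (hρ : ρ ∈ Set.Icc (0 : ℝ) 1) :
    0 < innovationSNRProd u v ρ := by
  have hres : 0 ≤ 1 - ρ ^ 2 := sub_nonneg.2 (pow_le_one₀ hρ.1 hρ.2)
  unfold innovationSNRProd
  positivity

lemma jointSNR_lt_jointSNR (hv : 0 ≤ v) (hρ : 0 ≤ ρ) (hu' : 0 < u') (hv' : 0 < v')
    (h : (u, v, ρ) < (u', v', ρ')) : jointSNR u v ρ < jointSNR u' v' ρ' := by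
  obtain ⟨⟨huu, hvv, hρρ⟩, hne⟩ := lt_iff_le_and_ne.1 h
  dsimp only at huu hvv hρρ
  have hpos : 0 < √(u' * v') := by positivity
  have hcross : ρ * √(u * v) ≤ ρ * √(u' * v') := by gcongr
  unfold jointSNR
  rcases huu.lt_or_eq with hlt | rfl
  · linarith [mul_le_mul_of_nonneg_right hρρ hpos.le]
  rcases hvv.lt_or_eq with hlt | rfl
  · linarith [mul_le_mul_of_nonneg_right hρρ hpos.le]
  have hlt : ρ < ρ' := hρρ.lt_of_ne fun heq => hne (by rw [heq])
  linarith [mul_lt_mul_of_pos_right hlt hpos]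

lemma jointSNR_mono (h : ρ ≤ ρ') : jointSNR u v ρ ≤ jointSNR u v ρ' := by
  unfold jointSNR
  gcongr

lemma innovationSNRProd_anti (hu : 0 ≤ u) (hv : 0 ≤ v) (hρ : 0 ≤ ρ) (h : ρ ≤ ρ') (hρ' : ρ' ≤ 1) :
    innovationSNRProd u v ρ' ≤ innovationSNRProd u v ρ := by
  have hres' : 0 ≤ 1 - ρ' ^ 2 := sub_nonneg.2 (pow_le_one₀ (hρ.trans h) hρ')
  have hres : 0 ≤ 1 - ρ ^ 2 := sub_nonneg.2 (pow_le_one₀ hρ (h.trans hρ'))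
  unfold innovationSNRProd
  gcongr

lemma innovationSNRProd_lt_innovationSNRProd {S T x y : ℝ} (hS : 0 < S) (hT : 0 < T) (hx : 0 ≤ x)
    (hy : 0 ≤ y) (hρ : ρ ∈ Set.Icc (0 : ℝ) 1)
    (h : (x * (1 - ρ ^ 2), y * (1 - ρ ^ 2)) < (1 - ρ' ^ 2, 1 - ρ' ^ 2)) :
    innovationSNRProd (x * S) (y * T) ρ < innovationSNRProd S T ρ' := by
  have hres : 0 ≤ 1 - ρ ^ 2 := sub_nonneg.2 (pow_le_one₀ hρ.1 hρ.2)
  rw [innovationSNRProd, innovationSNRProd, mul_right_comm, mul_right_comm y, mul_comm S,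
    mul_comm T]
  rcases Prod.mk_lt_mk.1 h with ⟨hlt, hle⟩ | ⟨hle, hlt⟩
  · have hres' : 0 ≤ 1 - ρ' ^ 2 := (mul_nonneg hx hres).trans hlt.le
    exact mul_lt_mul (by gcongr) (by gcongr) (by positivity) (by positivity)
  · have hres' : 0 ≤ 1 - ρ' ^ 2 := (mul_nonneg hx hres).trans hle
    exact mul_lt_mul' (by gcongr) (by gcongr) (by positivity) (by positivity)

end Monotonicity

section TotalCorrelation

variable {x y ρ r : ℝ}

lemma totalCorrelation_nonneg (hρ : 0 ≤ ρ) : 0 ≤ totalCorrelation x y ρ := by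
  unfold totalCorrelation
  positivity

lemma totalCorrelation_comm : totalCorrelation x y ρ = totalCorrelation y x ρ := by
  simp only [totalCorrelation, mul_comm]

lemma totalCorrelation_one_one : totalCorrelation 1 1 ρ = ρ := by
  simp [totalCorrelation]

lemma sq_totalCorrelation_le (ρ : ℝ) (hx : x ∈ Set.Icc (0 : ℝ) 1) (hy : y ∈ Set.Icc (0 : ℝ) 1) :
    totalCorrelation x y ρ ^ 2 ≤ 1 - x * (1 - ρ ^ 2) := by
  have hx' : 0 ≤ 1 - x := sub_nonneg.2 hx.2
  have hy' : 0 ≤ 1 - y := sub_nonneg.2 hy.2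
  have cauchy_schwarz (a c a' c' : ℝ) :
      (ρ * (a * c) + a' * c') ^ 2 ≤ (ρ ^ 2 * a ^ 2 + a' ^ 2) * (c ^ 2 + c' ^ 2) := by
    linarith [sq_nonneg (ρ * a * c' - a' * c)]
  calc totalCorrelation x y ρ ^ 2
      = (ρ * (√x * √y) + √(1 - x) * √(1 - y)) ^ 2 := by
        rw [totalCorrelation, sqrt_mul hx.1, sqrt_mul hx']
    _ ≤ (ρ ^ 2 * √x ^ 2 + √(1 - x) ^ 2) * (√y ^ 2 + √(1 - y) ^ 2) := cauchy_schwarz _ _ _ _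
    _ = 1 - x * (1 - ρ ^ 2) := by
        rw [sq_sqrt hx.1, sq_sqrt hx', sq_sqrt hy.1, sq_sqrt hy']
        ring

lemma sq_totalCorrelation_self (ρ : ℝ) (hx : x ∈ Set.Icc (0 : ℝ) 1) :
    totalCorrelation x x ρ ^ 2 = 1 - x * (1 - ρ ^ 2) - x * (1 - x) * (1 - ρ) ^ 2 := by
  rw [totalCorrelation, sqrt_mul_self hx.1, sqrt_mul_self (sub_nonneg.2 hx.2)]
  ring

lemma innovation_le_of_le_totalCorrelation (hx : x ∈ Set.Icc (0 : ℝ) 1)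
    (hy : y ∈ Set.Icc (0 : ℝ) 1) (hr : 0 ≤ r) (h : r ≤ totalCorrelation x y ρ) :
    x * (1 - ρ ^ 2) ≤ 1 - r ^ 2 := by
  linarith [sq_totalCorrelation_le ρ hx hy, pow_le_pow_left₀ hr h 2]

lemma eq_one_one_of_innovation_eq (hx : x ∈ Set.Icc (0 : ℝ) 1) (hρ : 0 ≤ ρ)
    (hr : r ∈ Set.Ico (0 : ℝ) 1) (h : r ≤ totalCorrelation x y ρ)
    (hxr : x * (1 - ρ ^ 2) = 1 - r ^ 2) (hyr : y * (1 - ρ ^ 2) = 1 - r ^ 2) :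
    (x, y, ρ) = (1, 1, r) := by
  have hprod : x * (1 - ρ ^ 2) ≠ 0 := by
    rw [hxr]
    exact (sub_pos.2 (pow_lt_one₀ hr.1 hr.2 two_ne_zero)).ne'
  obtain ⟨hx₀, hρ₁⟩ := mul_ne_zero_iff.1 hprod
  obtain rfl : x = y := mul_right_cancel₀ hρ₁ (hxr.trans hyr.symm)
  have hgap : x * (1 - x) * (1 - ρ) ^ 2 ≤ 0 := by
    linarith [sq_totalCorrelation_self ρ hx, pow_le_pow_left₀ hr.1 h 2]
  have hpos : 0 < x * (1 - ρ) ^ 2 := by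
    have : 1 - ρ ≠ 0 := fun h₀ => hρ₁ (by linear_combination (1 + ρ) * h₀)
    have := hx.1.lt_of_ne' hx₀
    positivity
  obtain rfl : x = 1 := le_antisymm hx.2 <| by
    by_contra! hlt
    linarith [mul_pos hpos (sub_pos.2 hlt)]
  have hsq : ρ ^ 2 = r ^ 2 := by linarith
  rw [(sq_eq_sq₀ hρ hr.1).1 hsq]

lemma innovation_lt_of_le_totalCorrelation (hx : x ∈ Set.Icc (0 : ℝ) 1)
    (hy : y ∈ Set.Icc (0 : ℝ) 1) (hρ : 0 ≤ ρ) (hr : r ∈ Set.Ico (0 : ℝ) 1)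
    (h : r ≤ totalCorrelation x y ρ) (hne : (x, y, ρ) ≠ (1, 1, r)) :
    (x * (1 - ρ ^ 2), y * (1 - ρ ^ 2)) < (1 - r ^ 2, 1 - r ^ 2) := by
  refine lt_of_le_of_ne ⟨innovation_le_of_le_totalCorrelation hx hy hr.1 h,
    innovation_le_of_le_totalCorrelation hy hx hr.1 (totalCorrelation_comm ▸ h)⟩ fun heq => hne ?_
  obtain ⟨hxr, hyr⟩ := Prod.mk.inj heq
  exact eq_one_one_of_innovation_eq hx hρ hr h hxr hyr

end TotalCorrelation

section EnergyConstraint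

variable {S T b x y ρ : ℝ}

lemma rhoMin_one_one_nonneg : 0 ≤ rhoMin S T b 1 1 := by
  unfold rhoMin
  positivity

lemma max_zero_sub_div_lt_one (hS : 0 < S) (hT : 0 < T) (hb : b < 1 + S + T + 2 * √(S * T)) :
    max 0 (b - (1 + S + T)) / (2 * √(S * T)) < 1 := by
  rw [div_lt_one (by positivity), max_lt_iff]
  exact ⟨by positivity, by linarith⟩

lemma rhoMin_one_one_eq (hS : 0 < S) (hT : 0 < T) (hb : b < 1 + S + T + 2 * √(S * T)) :
    rhoMin S T b 1 1 = max 0 (b - (1 + S + T)) / (2 * √(S * T)) := by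
  simpa [rhoMin] using (max_zero_sub_div_lt_one hS hT hb).le

lemma rhoMin_one_one_lt_one (hS : 0 < S) (hT : 0 < T) (hb : b < 1 + S + T + 2 * √(S * T)) :
    rhoMin S T b 1 1 < 1 :=
  (rhoMin_one_one_eq hS hT hb).trans_lt (max_zero_sub_div_lt_one hS hT hb)

lemma le_g_iff_rhoMin_le_totalCorrelation (hS : 0 < S) (hT : 0 < T)
    (hb : b < 1 + S + T + 2 * √(S * T)) (hρ : 0 ≤ ρ) :
    b ≤ g S T x y ρ ↔ rhoMin S T b 1 1 ≤ totalCorrelation x y ρ := by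
  have ht : 0 ≤ totalCorrelation x y ρ * (2 * √(S * T)) :=
    mul_nonneg (totalCorrelation_nonneg hρ) (by positivity)
  have hg : g S T x y ρ = totalCorrelation x y ρ * (2 * √(S * T)) + (1 + S + T) := by
    rw [g, totalCorrelation]
    ring
  rw [rhoMin_one_one_eq hS hT hb, div_le_iff₀ (by positivity), max_le_iff,
    and_iff_right ht, hg, sub_le_iff_le_add]

end EnergyConstraint

section SumRate

variable {S T x y ρ r s m : ℝ}

lemma f_eq_half_logb_min (hS : 0 ≤ S) (hT : 0 ≤ T) (hx : 0 ≤ x) (hy : 0 ≤ y)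
    (hρ : ρ ∈ Set.Icc (0 : ℝ) 1) :
    f S T x y ρ = 1 / 2 * logb 2
      (min (jointSNR (x * S) (y * T) ρ) (innovationSNRProd (x * S) (y * T) ρ)) := by
  have hjoint : 0 < jointSNR (x * S) (y * T) ρ := jointSNR_pos (by positivity) (by positivity) hρ.1
  have hprod : 0 < innovationSNRProd (x * S) (y * T) ρ :=
    innovationSNRProd_pos (by positivity) (by positivity) hρ
  rw [(strictMonoOn_logb one_lt_two).monotoneOn.map_min hjoint hprod,
    mul_min_of_nonneg _ _ one_half_pos.le]
  rfl

lemma f_lt_f_one_one (hS : 0 ≤ S) (hT : 0 ≤ T) (hx : 0 ≤ x) (hy : 0 ≤ y)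
    (hρ : ρ ∈ Set.Icc (0 : ℝ) 1) (hr : r ∈ Set.Icc (0 : ℝ) 1)
    (hle : innovationSNRProd S T r ≤ jointSNR S T r)
    (hlt : min (jointSNR (x * S) (y * T) ρ) (innovationSNRProd (x * S) (y * T) ρ)
      < innovationSNRProd S T r) :
    f S T x y ρ < f S T 1 1 r := by
  rw [f_eq_half_logb_min hS hT hx hy hρ, f_eq_half_logb_min hS hT zero_le_one zero_le_one hr,
    one_mul, one_mul, min_eq_right hle]
  have hpos : 0 < min (jointSNR (x * S) (y * T) ρ) (innovationSNRProd (x * S) (y * T) ρ) :=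
    lt_min (jointSNR_pos (by positivity) (by positivity) hρ.1)
      (innovationSNRProd_pos (by positivity) (by positivity) hρ)
  exact mul_lt_mul_of_pos_left (logb_lt_logb one_lt_two hpos hlt) one_half_pos

lemma innovationSNRProd_le_jointSNR_of_le (hS : 0 ≤ S) (hT : 0 ≤ T) (hs : 0 ≤ s)
    (hcross : innovationSNRProd S T s ≤ jointSNR S T s) (hsr : s ≤ r) (hr : r ≤ 1) :
    innovationSNRProd S T r ≤ jointSNR S T r :=
  (innovationSNRProd_anti hS hT hs hsr hr).trans (hcross.trans (jointSNR_mono hsr))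

lemma jointSNR_lt_of_correlation_le (hS : 0 < S) (hT : 0 < T) (hx : x ∈ Set.Icc (0 : ℝ) 1)
    (hy : y ∈ Set.Icc (0 : ℝ) 1) (hρ : 0 ≤ ρ) (h : ρ ≤ r) (hne : (x, y, ρ) ≠ (1, 1, r)) :
    jointSNR (x * S) (y * T) ρ < jointSNR S T r := by
  refine jointSNR_lt_jointSNR (mul_nonneg hy.1 hT.le) hρ hS hT <| lt_of_le_of_ne
    ⟨mul_le_of_le_one_left hS.le hx.2, mul_le_of_le_one_left hT.le hy.2, h⟩ fun heq => hne ?_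
  simpa [hS.ne', hT.ne'] using heq

lemma innovationSNRProd_lt_of_lt_correlation (hS : 0 < S) (hT : 0 < T)
    (hx : x ∈ Set.Icc (0 : ℝ) 1) (hy : y ∈ Set.Icc (0 : ℝ) 1) (hρ : ρ ∈ Set.Icc (0 : ℝ) 1)
    (hr : 0 ≤ r) (h : r < ρ) :
    innovationSNRProd (x * S) (y * T) ρ < innovationSNRProd S T r := by
  have hres : 0 ≤ 1 - ρ ^ 2 := sub_nonneg.2 (pow_le_one₀ hρ.1 hρ.2)
  have hlt : 1 - ρ ^ 2 < 1 - r ^ 2 := by gcongr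
  refine innovationSNRProd_lt_innovationSNRProd hS hT hx.1 hy.1 hρ <|
    Prod.mk_lt_mk.2 <| Or.inl ⟨?_, ?_⟩
  · exact (mul_le_of_le_one_left hres hx.2).trans_lt hlt
  · exact (mul_le_of_le_one_left hres hy.2).trans hlt.le

lemma min_jointSNR_innovationSNRProd_lt (hS : 0 < S) (hT : 0 < T) (hx : x ∈ Set.Icc (0 : ℝ) 1)
    (hy : y ∈ Set.Icc (0 : ℝ) 1) (hρ : ρ ∈ Set.Icc (0 : ℝ) 1) (hm : m ∈ Set.Ico (0 : ℝ) 1)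
    (hs : 0 ≤ s) (hcross : jointSNR S T s ≤ innovationSNRProd S T s)
    (h : m ≤ totalCorrelation x y ρ) (hne : (x, y, ρ) ≠ (1, 1, max m s)) :
    min (jointSNR (x * S) (y * T) ρ) (innovationSNRProd (x * S) (y * T) ρ)
      < innovationSNRProd S T (max m s) := by
  rcases le_total s m with hsm | hms
  · rw [max_eq_left hsm] at hne ⊢
    exact min_lt_of_right_lt <| innovationSNRProd_lt_innovationSNRProd hS hT hx.1 hy.1 hρ
      (innovation_lt_of_le_totalCorrelation hx hy hρ.1 hm h hne)
  rw [max_eq_right hms] at hne ⊢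
  rcases le_or_gt ρ s with hρs | hsρ
  · exact min_lt_of_left_lt <|
      (jointSNR_lt_of_correlation_le hS hT hx hy hρ.1 hρs hne).trans_le hcross
  · exact min_lt_of_right_lt (innovationSNRProd_lt_of_lt_correlation hS hT hx hy hρ hs hsρ)

end SumRate

/-- Lemma 2 of Appendix F: (1,1,ρ̄) with ρ̄ = max{ρ_min(1,1), ρ⋆(1,1)} is the
unique maximizer of the feedback sum-rate optimization problem. -/
theorem unique_sum_rate_maximizer_feedback (SNR₁₁ SNR₁₂ SNR₂₁ SNR₂₂ : ℝ)
    (hS₁₁ : 0 < SNR₁₁) (hS₁₂ : 0 < SNR₁₂) (hS₂₁ : 0 < SNR₂₁) (hS₂₂ : 0 < SNR₂₂)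
    (b : ℝ) (hb₀ : 0 ≤ b)
    (hb₁ : b < 1 + SNR₂₁ + SNR₂₂ + 2 * Real.sqrt (SNR₂₁ * SNR₂₂))
    (ρs : ℝ) (hρs : ρs ∈ Set.Ioo (0:ℝ) 1)
    (hρseq : 1 + SNR₁₁ + SNR₁₂ + 2 * ρs * Real.sqrt (SNR₁₁ * SNR₁₂)
      = (1 + SNR₁₁ * (1 - ρs ^ 2)) * (1 + SNR₁₂ * (1 - ρs ^ 2))) :
    g SNR₂₁ SNR₂₂ 1 1 (max (rhoMin SNR₂₁ SNR₂₂ b 1 1) ρs) ≥ b ∧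
    ∀ β₁ ∈ Set.Icc (0:ℝ) 1, ∀ β₂ ∈ Set.Icc (0:ℝ) 1, ∀ ρ ∈ Set.Icc (0:ℝ) 1,
      g SNR₂₁ SNR₂₂ β₁ β₂ ρ ≥ b →
      (β₁, β₂, ρ) ≠ (1, 1, max (rhoMin SNR₂₁ SNR₂₂ b 1 1) ρs) →
      f SNR₁₁ SNR₁₂ β₁ β₂ ρ
        < f SNR₁₁ SNR₁₂ 1 1 (max (rhoMin SNR₂₁ SNR₂₂ b 1 1) ρs) := by
  have hm : rhoMin SNR₂₁ SNR₂₂ b 1 1 ∈ Set.Ico (0 : ℝ) 1 :=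
    ⟨rhoMin_one_one_nonneg, rhoMin_one_one_lt_one hS₂₁ hS₂₂ hb₁⟩
  have hmax : max (rhoMin SNR₂₁ SNR₂₂ b 1 1) ρs ∈ Set.Icc (0 : ℝ) 1 :=
    ⟨le_max_of_le_left hm.1, max_le hm.2.le hρs.2.le⟩
  refine ⟨?_, fun β₁ hβ₁ β₂ hβ₂ ρ hρ hg hne => ?_⟩
  · rw [ge_iff_le, le_g_iff_rhoMin_le_totalCorrelation hS₂₁ hS₂₂ hb₁ hmax.1,
      totalCorrelation_one_one]
    exact le_max_left _ _
  · have hcorr := (le_g_iff_rhoMin_le_totalCorrelation hS₂₁ hS₂₂ hb₁ hρ.1).1 hg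
    refine f_lt_f_one_one hS₁₁.le hS₁₂.le hβ₁.1 hβ₂.1 hρ hmax ?_ ?_
    · exact innovationSNRProd_le_jointSNR_of_le hS₁₁.le hS₁₂.le hρs.1.le hρseq.ge
        (le_max_right _ _) hmax.2
    · exact min_jointSNR_innovationSNRProd_lt hS₁₁ hS₁₂ hβ₁ hβ₂ hρ hm hρs.1.le hρseq.le hcorr hne
end

section
/- Sum-capacity without feedback, both-users regime (Proposition 4, case 1): for every real b with 0 ≤ b ≤ 1 + SNR₂₁ + SNR₂₂ + 2·√(SNR₂₁·SNR₂₂)·min{ √(SNR₁₂/SNR₁₁), √(SNR₁₁/SNR₁₂) }, the supremum of f₀(β₁,β₂) over all (β₁,β₂) ∈ [0,1]² satisfying g₀(β₁,β₂) ≥ b equals (1/2)·log₂(1 + SNR₁₁ + SNR₁₂ − 2·ξ(b)·√(SNR₁₁·SNR₁₂)), attained at β₁ = 1 − ξ(b)·√(SNR₁₂/SNR₁₁) and β₂ = 1 − ξ(b)·√(SNR₁₁/SNR₁₂). -/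
open Real

/-- The no-feedback sum-rate objective `f₀(β₁,β₂)`. -/
noncomputable def f₀ (SNR₁₁ SNR₁₂ β₁ β₂ : ℝ) : ℝ :=
  min
    ((1/2) * logb 2 (1 + β₁ * SNR₁₁ + β₂ * SNR₁₂))
    ((1/2) * logb 2 (1 + β₁ * SNR₁₁) + (1/2) * logb 2 (1 + β₂ * SNR₁₂))

/-!
The energy constraint `b ≤ g₀(β₁, β₂)` says exactly that `ρ = ξ(b)` is at most the geometric mean
`√((1 - β₁)(1 - β₂))`. By AM-GM, a geometric mean of at least `ρ` costs the information receiver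
`(1 - β₁) SNR₁₁ + (1 - β₂) SNR₁₂ ≥ 2 ρ √(SNR₁₁ SNR₁₂)`, with equality when both users give up the
same received power `ρ √(SNR₁₁ SNR₁₂)`. The upper bound on `b` makes this balanced choice a point
of `[0, 1]²`, and on `[0, 1]²` the joint term of `f₀` is the smaller one.
-/

/-- The fraction `β` of power that a user received with SNR `S`, paired with a user received with
SNR `S'`, keeps for information at correlation `ρ`, chosen so that the power `(1 - β) * S` given up
is the symmetric quantity `ρ * √(S * S')`. -/
noncomputable def balancedFraction (S S' ρ : ℝ) : ℝ :=
  1 - ρ * √(S' / S)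

lemma two_mul_sqrt_mul_sqrt_le_add {u v x y : ℝ} (hu : 0 ≤ u) (hv : 0 ≤ v) (hx : 0 ≤ x)
    (hy : 0 ≤ y) : 2 * (√(u * v) * √(x * y)) ≤ u * x + v * y := by
  refine two_mul_le_add_of_sq_le_mul (mul_nonneg hu hx) (mul_nonneg hv hy) (le_of_eq ?_)
  rw [mul_pow, sq_sqrt (mul_nonneg hu hv), sq_sqrt (mul_nonneg hx hy), mul_mul_mul_comm]

section BalancedFraction

variable {S S' ρ : ℝ}

lemma balancedFraction_mem_Icc (hρ : 0 ≤ ρ) (hρ_le : ρ ≤ √(S / S')) :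
    balancedFraction S S' ρ ∈ Set.Icc (0 : ℝ) 1 := by
  have h_le_one : ρ * √(S' / S) ≤ 1 := by
    rw [← inv_div S S', sqrt_inv]
    exact mul_inv_le_one_of_le₀ hρ_le (sqrt_nonneg _)
  exact ⟨sub_nonneg.2 h_le_one, sub_le_self _ (by positivity)⟩

lemma balancedFraction_mul_self (hS : 0 ≤ S) :
    balancedFraction S S' ρ * S = S - ρ * √(S * S') := by
  have h_sqrt : √(S' / S) * S = √(S * S') := by
    rw [sqrt_div' _ hS, div_mul_comm, div_sqrt, ← sqrt_mul hS]
  rw [balancedFraction, sub_mul, one_mul, mul_assoc, h_sqrt]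

lemma sqrt_one_sub_balancedFraction_mul (hS : 0 < S) (hS' : 0 < S') (hρ : 0 ≤ ρ) :
    √((1 - balancedFraction S S' ρ) * (1 - balancedFraction S' S ρ)) = ρ := by
  have h_inv : √(S' / S) * √(S / S') = 1 := by
    rw [← inv_div S S', sqrt_inv]
    exact inv_mul_cancel₀ (sqrt_pos.2 (div_pos hS hS')).ne'
  rw [balancedFraction, balancedFraction, sub_sub_cancel, sub_sub_cancel, mul_mul_mul_comm, h_inv,
    mul_one, sqrt_mul_self hρ]

end BalancedFraction

section EnergyRate

variable {S₁ S₂ b ρ β₁ β₂ : ℝ}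

lemma xi_nonneg_s9 : 0 ≤ xi S₁ S₂ b :=
  div_nonneg (le_max_left _ _) (by positivity)

lemma xi_le_iff_s9 (hS : 0 < S₁ * S₂) (hρ : 0 ≤ ρ) :
    xi S₁ S₂ b ≤ ρ ↔ b ≤ 1 + S₁ + S₂ + 2 * √(S₁ * S₂) * ρ := by
  have h_pos : 0 < 2 * √(S₁ * S₂) := mul_pos two_pos (sqrt_pos.2 hS)
  rw [xi, div_le_iff₀ h_pos, max_le_iff, and_iff_right (mul_nonneg hρ h_pos.le),
    sub_le_iff_le_add', mul_comm ρ]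

lemma g₀_eq (hS : 0 ≤ S₁ * S₂) :
    g₀ S₁ S₂ β₁ β₂ = 1 + S₁ + S₂ + 2 * √(S₁ * S₂) * √((1 - β₁) * (1 - β₂)) := by
  rw [g₀, mul_mul_mul_comm, mul_comm (_ * _), sqrt_mul hS, mul_assoc]

lemma le_g₀_iff (hS : 0 < S₁ * S₂) :
    b ≤ g₀ S₁ S₂ β₁ β₂ ↔ xi S₁ S₂ b ≤ √((1 - β₁) * (1 - β₂)) := by
  rw [g₀_eq hS.le, xi_le_iff_s9 hS (sqrt_nonneg _)]

end EnergyRate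

section InformationRate

variable {S₁ S₂ ρ β₁ β₂ : ℝ}

lemma f₀_eq_half_logb (h₁ : 0 ≤ β₁ * S₁) (h₂ : 0 ≤ β₂ * S₂) :
    f₀ S₁ S₂ β₁ β₂ = (1 / 2) * logb 2 (1 + β₁ * S₁ + β₂ * S₂) := by
  have h_le_mul : 1 + β₁ * S₁ + β₂ * S₂ ≤ (1 + β₁ * S₁) * (1 + β₂ * S₂) := by
    linarith [mul_nonneg h₁ h₂]
  refine min_eq_left ?_
  rw [← mul_add, ← logb_mul (by positivity) (by positivity)]
  gcongr
  exact one_lt_two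

lemma f₀_le_of_le_sqrt (hS₁ : 0 ≤ S₁) (hS₂ : 0 ≤ S₂) (hβ₁ : β₁ ∈ Set.Icc (0 : ℝ) 1)
    (hβ₂ : β₂ ∈ Set.Icc (0 : ℝ) 1) (hρ : ρ ≤ √((1 - β₁) * (1 - β₂))) :
    f₀ S₁ S₂ β₁ β₂ ≤ (1 / 2) * logb 2 (1 + S₁ + S₂ - 2 * ρ * √(S₁ * S₂)) := by
  have h₁ : 0 ≤ β₁ * S₁ := mul_nonneg hβ₁.1 hS₁
  have h₂ : 0 ≤ β₂ * S₂ := mul_nonneg hβ₂.1 hS₂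
  have h_cost : 2 * (ρ * √(S₁ * S₂)) ≤ (1 - β₁) * S₁ + (1 - β₂) * S₂ :=
    calc 2 * (ρ * √(S₁ * S₂)) ≤ 2 * (√((1 - β₁) * (1 - β₂)) * √(S₁ * S₂)) := by gcongr
      _ ≤ (1 - β₁) * S₁ + (1 - β₂) * S₂ :=
        two_mul_sqrt_mul_sqrt_le_add (sub_nonneg.2 hβ₁.2) (sub_nonneg.2 hβ₂.2) hS₁ hS₂
  refine (min_le_left _ _).trans ?_
  gcongr
  · exact one_lt_two
  · linarith

lemma f₀_balancedFraction (hS₁ : 0 ≤ S₁) (hS₂ : 0 ≤ S₂)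
    (hβ₁ : 0 ≤ balancedFraction S₁ S₂ ρ) (hβ₂ : 0 ≤ balancedFraction S₂ S₁ ρ) :
    f₀ S₁ S₂ (balancedFraction S₁ S₂ ρ) (balancedFraction S₂ S₁ ρ) =
      (1 / 2) * logb 2 (1 + S₁ + S₂ - 2 * ρ * √(S₁ * S₂)) := by
  rw [f₀_eq_half_logb (mul_nonneg hβ₁ hS₁) (mul_nonneg hβ₂ hS₂), balancedFraction_mul_self hS₁,
    balancedFraction_mul_self hS₂, mul_comm S₂ S₁]
  congr 2
  ring

end InformationRate

/-- Proposition 4, case 1: for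
0 ≤ b ≤ 1 + SNR₂₁ + SNR₂₂ + 2·√(SNR₂₁·SNR₂₂)·min{√(SNR₁₂/SNR₁₁), √(SNR₁₁/SNR₁₂)},
the no-feedback information sum-capacity is
½·log₂(1 + SNR₁₁ + SNR₁₂ − 2·ξ(b)·√(SNR₁₁·SNR₁₂)), attained at
β₁ = 1 − ξ(b)·√(SNR₁₂/SNR₁₁), β₂ = 1 − ξ(b)·√(SNR₁₁/SNR₁₂). -/
theorem sum_capacity_no_feedback_both_users (SNR₁₁ SNR₁₂ SNR₂₁ SNR₂₂ : ℝ)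
    (hS₁₁ : 0 < SNR₁₁) (hS₁₂ : 0 < SNR₁₂) (hS₂₁ : 0 < SNR₂₁) (hS₂₂ : 0 < SNR₂₂)
    (b : ℝ) (hb₀ : 0 ≤ b)
    (hb₁ : b ≤ 1 + SNR₂₁ + SNR₂₂ + 2 * Real.sqrt (SNR₂₁ * SNR₂₂) *
      min (Real.sqrt (SNR₁₂ / SNR₁₁)) (Real.sqrt (SNR₁₁ / SNR₁₂))) :
    IsGreatest
      {r : ℝ | ∃ β₁ ∈ Set.Icc (0:ℝ) 1, ∃ β₂ ∈ Set.Icc (0:ℝ) 1,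
          g₀ SNR₂₁ SNR₂₂ β₁ β₂ ≥ b ∧ r = f₀ SNR₁₁ SNR₁₂ β₁ β₂}
      ((1/2) * logb 2 (1 + SNR₁₁ + SNR₁₂ -
        2 * xi SNR₂₁ SNR₂₂ b * Real.sqrt (SNR₁₁ * SNR₁₂))) ∧
    g₀ SNR₂₁ SNR₂₂ (1 - xi SNR₂₁ SNR₂₂ b * Real.sqrt (SNR₁₂ / SNR₁₁))
        (1 - xi SNR₂₁ SNR₂₂ b * Real.sqrt (SNR₁₁ / SNR₁₂)) ≥ b ∧
    f₀ SNR₁₁ SNR₁₂ (1 - xi SNR₂₁ SNR₂₂ b * Real.sqrt (SNR₁₂ / SNR₁₁))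
        (1 - xi SNR₂₁ SNR₂₂ b * Real.sqrt (SNR₁₁ / SNR₁₂))
      = (1/2) * logb 2 (1 + SNR₁₁ + SNR₁₂ -
          2 * xi SNR₂₁ SNR₂₂ b * Real.sqrt (SNR₁₁ * SNR₁₂)) := by
  have hS₂ : 0 < SNR₂₁ * SNR₂₂ := mul_pos hS₂₁ hS₂₂
  have hξ : 0 ≤ xi SNR₂₁ SNR₂₂ b := xi_nonneg_s9
  obtain ⟨hξ₂, hξ₁⟩ := le_min_iff.1 ((xi_le_iff_s9 hS₂ (by positivity)).2 hb₁)
  have hβ₁ := balancedFraction_mem_Icc hξ hξ₁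
  have hβ₂ := balancedFraction_mem_Icc hξ hξ₂
  have h_energy := (le_g₀_iff hS₂).2 (sqrt_one_sub_balancedFraction_mul hS₁₁ hS₁₂ hξ).ge
  have h_rate := f₀_balancedFraction hS₁₁.le hS₁₂.le hβ₁.1 hβ₂.1
  refine ⟨⟨⟨_, hβ₁, _, hβ₂, h_energy, h_rate.symm⟩, ?_⟩, h_energy, h_rate⟩
  rintro _ ⟨γ₁, hγ₁, γ₂, hγ₂, hb, rfl⟩
  exact f₀_le_of_le_sqrt hS₁₁.le hS₁₂.le hγ₁ hγ₂ ((le_g₀_iff hS₂).1 hb)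
end

section
/- Necessary conditions for the no-feedback sum-rate maximizer (Lemma in Appendix G): (i) if 1 + SNR₂₁ + SNR₂₂ < b ≤ 1 + SNR₂₁ + SNR₂₂ + 2·√(SNR₂₁·SNR₂₂) and (β₁*,β₂*) ∈ [0,1]² satisfies g₀(β₁*,β₂*) ≥ b and f₀(β₁*,β₂*) ≥ f₀(β₁,β₂) for all (β₁,β₂) ∈ [0,1]² with g₀(β₁,β₂) ≥ b, then g₀(β₁*,β₂*) = b; (ii) if 0 ≤ b ≤ 1 + SNR₂₁ + SNR₂₂, then (1,1) is feasible and any such maximizer satisfies β₁* = β₂* = 1. -/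
open Real

/-!
On `[0,1]²` the sum-rate bound is the smaller term of `f₀`, so `f₀` is strictly increasing in each
variable. On each edge `β₁ = 1` or `β₂ = 1` the function `g₀` is constant, equal to
`1 + SNR₂₁ + SNR₂₂`. If `b` exceeds this value, increase `β₁` from a maximizer: by the intermediate
value theorem `g₀` equals `b` somewhere on the way to `β₁ = 1`, and this can only be at the
maximizer itself. Otherwise both edges are feasible, and moving to either one strictly increases
`f₀` unless the maximizer is already there.
-/

lemma eq_of_isMaxOn_of_strictMonoOn {α β γ : Type*} [ConditionallyCompleteLinearOrder α]
    [TopologicalSpace α] [OrderTopology α] [DenselyOrdered α] [Preorder β] [LinearOrder γ]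
    [TopologicalSpace γ] [OrderClosedTopology γ] {f : α → β} {g : α → γ} {x c : α} {b : γ}
    (hxc : x ≤ c) (hf : StrictMonoOn f (Set.Icc x c)) (hg : ContinuousOn g (Set.Icc x c))
    (hgx : b ≤ g x) (hgc : g c ≤ b) (hmax : IsMaxOn f {z ∈ Set.Icc x c | b ≤ g z} x) :
    g x = b := by
  obtain ⟨z, hz, hgz⟩ := intermediate_value_Icc' hxc hg ⟨hgc, hgx⟩
  have hfz : f z ≤ f x := hmax ⟨hz, hgz.ge⟩
  have hzx : z ≤ x := (hf.le_iff_le hz (Set.left_mem_Icc.2 hxc)).1 hfz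
  rwa [hzx.antisymm hz.1] at hgz

lemma f₀_comm (S₁ S₂ x y : ℝ) : f₀ S₁ S₂ x y = f₀ S₂ S₁ y x := by
  simp only [f₀, add_comm, add_left_comm]

lemma f₀_eq_of_nonneg {S₁ S₂ x y : ℝ} (hx : 0 ≤ x * S₁) (hy : 0 ≤ y * S₂) :
    f₀ S₁ S₂ x y = (1 / 2) * logb 2 (1 + x * S₁ + y * S₂) := by
  have hprod : 1 + x * S₁ + y * S₂ ≤ (1 + x * S₁) * (1 + y * S₂) := by
    linarith [mul_nonneg hx hy]
  refine min_eq_left ?_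
  rw [← mul_add, ← logb_mul (by positivity) (by positivity)]
  gcongr
  exact one_lt_two

lemma strictMonoOn_f₀_left {S₁ S₂ y : ℝ} (hS₁ : 0 < S₁) (hy : 0 ≤ y * S₂) :
    StrictMonoOn (fun x => f₀ S₁ S₂ x y) (Set.Ici 0) := by
  intro x (hx : 0 ≤ x) x' (hx' : 0 ≤ x') hlt
  beta_reduce
  rw [f₀_eq_of_nonneg (by positivity) hy, f₀_eq_of_nonneg (by positivity) hy]
  gcongr
  exact one_lt_two

lemma strictMonoOn_f₀_right {S₁ S₂ x : ℝ} (hS₂ : 0 < S₂) (hx : 0 ≤ x * S₁) :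
    StrictMonoOn (f₀ S₁ S₂ x) (Set.Ici 0) := by
  simpa only [f₀_comm S₂ S₁] using strictMonoOn_f₀_left hS₂ hx

lemma g₀_one_left (S₁ S₂ y : ℝ) : g₀ S₁ S₂ 1 y = 1 + S₁ + S₂ := by
  simp [g₀]

lemma g₀_one_right (S₁ S₂ x : ℝ) : g₀ S₁ S₂ x 1 = 1 + S₁ + S₂ := by
  simp [g₀]

lemma continuous_g₀_left (S₁ S₂ y : ℝ) : Continuous fun x => g₀ S₁ S₂ x y := by
  unfold g₀
  fun_prop

/-- Lemma of Appendix G: (i) when 1+SNR₂₁+SNR₂₂ < b ≤ 1+SNR₂₁+SNR₂₂+2√(SNR₂₁SNR₂₂),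
any maximizer of the no-feedback sum-rate problem saturates the energy
constraint; (ii) when 0 ≤ b ≤ 1+SNR₂₁+SNR₂₂, the pair (1,1) is feasible and
any maximizer is (1,1). -/
theorem no_feedback_maximizer_necessary_conditions (SNR₁₁ SNR₁₂ SNR₂₁ SNR₂₂ : ℝ)
    (hS₁₁ : 0 < SNR₁₁) (hS₁₂ : 0 < SNR₁₂) (hS₂₁ : 0 < SNR₂₁) (hS₂₂ : 0 < SNR₂₂) :
    (∀ b : ℝ, 1 + SNR₂₁ + SNR₂₂ < b →
      b ≤ 1 + SNR₂₁ + SNR₂₂ + 2 * Real.sqrt (SNR₂₁ * SNR₂₂) →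
      ∀ β₁ ∈ Set.Icc (0:ℝ) 1, ∀ β₂ ∈ Set.Icc (0:ℝ) 1,
        g₀ SNR₂₁ SNR₂₂ β₁ β₂ ≥ b →
        (∀ β₁' ∈ Set.Icc (0:ℝ) 1, ∀ β₂' ∈ Set.Icc (0:ℝ) 1,
          g₀ SNR₂₁ SNR₂₂ β₁' β₂' ≥ b →
          f₀ SNR₁₁ SNR₁₂ β₁' β₂' ≤ f₀ SNR₁₁ SNR₁₂ β₁ β₂) →
        g₀ SNR₂₁ SNR₂₂ β₁ β₂ = b) ∧
    (∀ b : ℝ, 0 ≤ b → b ≤ 1 + SNR₂₁ + SNR₂₂ →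
      g₀ SNR₂₁ SNR₂₂ 1 1 ≥ b ∧
      ∀ β₁ ∈ Set.Icc (0:ℝ) 1, ∀ β₂ ∈ Set.Icc (0:ℝ) 1,
        g₀ SNR₂₁ SNR₂₂ β₁ β₂ ≥ b →
        (∀ β₁' ∈ Set.Icc (0:ℝ) 1, ∀ β₂' ∈ Set.Icc (0:ℝ) 1,
          g₀ SNR₂₁ SNR₂₂ β₁' β₂' ≥ b →
          f₀ SNR₁₁ SNR₁₂ β₁' β₂' ≤ f₀ SNR₁₁ SNR₁₂ β₁ β₂) →
        β₁ = 1 ∧ β₂ = 1) := by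
  constructor
  · intro b hb _ x hx y hy hg hmax
    have hmono : StrictMonoOn (fun z => f₀ SNR₁₁ SNR₁₂ z y) (Set.Icc x 1) :=
      (strictMonoOn_f₀_left hS₁₁ (mul_nonneg hy.1 hS₁₂.le)).mono fun z hz => hx.1.trans hz.1
    exact eq_of_isMaxOn_of_strictMonoOn (g := fun z => g₀ SNR₂₁ SNR₂₂ z y) hx.2 hmono
      (continuous_g₀_left SNR₂₁ SNR₂₂ y).continuousOn hg ((g₀_one_left ..).trans_le hb.le)
      fun z hz => hmax z ⟨hx.1.trans hz.1.1, hz.1.2⟩ y hy hz.2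
  · intro b _ hb
    have hfeas_left : ∀ y, b ≤ g₀ SNR₂₁ SNR₂₂ 1 y := fun y => hb.trans_eq (g₀_one_left ..).symm
    have hfeas_right : ∀ x, b ≤ g₀ SNR₂₁ SNR₂₂ x 1 := fun x => hb.trans_eq (g₀_one_right ..).symm
    refine ⟨hfeas_left 1, fun x hx y hy _ hmax => ⟨hx.2.antisymm ?_, hy.2.antisymm ?_⟩⟩
    · exact ((strictMonoOn_f₀_left hS₁₁ (mul_nonneg hy.1 hS₁₂.le)).le_iff_le
        (Set.mem_Ici.2 zero_le_one) hx.1).1 (hmax 1 (by simp) y hy (hfeas_left y))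
    · exact ((strictMonoOn_f₀_right hS₁₂ (mul_nonneg hx.1 hS₁₁.le)).le_iff_le
        (Set.mem_Ici.2 zero_le_one) hy.1).1 (hmax x hx 1 (by simp) (hfeas_right x))
end

section
/- Core identity of Theorem 3: for all strictly positive real numbers SNR₁₁ and SNR₁₂, the quantity γ := ((SNR₁₁ + SNR₁₂)/(2·SNR₁₁·SNR₁₂))·(√(1 + 4·SNR₁₁·SNR₁₂/(SNR₁₁ + SNR₁₂)) − 1) satisfies 0 < γ < 1 and (1 + γ·SNR₁₁)·(1 + γ·SNR₁₂) = 1 + SNR₁₁ + SNR₁₂, and γ is the unique nonnegative real number with this latter property. -/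
/-!
For positive `a` and `b` the map `x ↦ (1 + x * a) * (1 + x * b)` is strictly increasing on `[0, ∞)`,
so it takes the value `1 + a + b` at most once there, and only to the left of `1`, where its value
`(1 + a) * (1 + b)` is larger. The number `γ` is where it is taken: it is the positive root of the
quadratic equation `a * b * x ^ 2 + (a + b) * x = a + b`, whose discriminant is
`(a + b) ^ 2 * (1 + 4 * a * b / (a + b))`.
-/

theorem strictMonoOn_one_add_mul_mul_one_add_mul {R : Type*} [Semiring R] [PartialOrder R]
    [IsStrictOrderedRing R] {a b : R} (ha : 0 ≤ a) (hb : 0 < b) :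
    StrictMonoOn (fun x : R ↦ (1 + x * a) * (1 + x * b)) (Set.Ici 0) := by
  intro x (hx : 0 ≤ x) y (hy : 0 ≤ y) hxy
  have h_left : 1 + x * a ≤ 1 + y * a := by gcongr
  have h_right : 1 + x * b < 1 + y * b := by gcongr
  exact mul_lt_mul' h_left h_right (by positivity) (by positivity)

theorem one_add_mul_mul_one_add_mul_eq_of_sq_eq {K : Type*} [Field K] [NeZero (2 : K)]
    {a b r : K} (ha : a ≠ 0) (hb : b ≠ 0) (hab : a + b ≠ 0)
    (hr : r ^ 2 = 1 + 4 * a * b / (a + b)) :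
    (1 + (a + b) / (2 * a * b) * (r - 1) * a) * (1 + (a + b) / (2 * a * b) * (r - 1) * b) =
      1 + a + b := by
  have h_two : (2 : K) ≠ 0 := two_ne_zero
  calc
    _ = 1 + (a + b) ^ 2 / (2 ^ 2 * a * b) * (r ^ 2 - 1) := by
      field_simp
      ring
    _ = 1 + a + b := by
      rw [hr]
      field_simp
      ring

/-- The number `γ` of the paper as a function of the two signal-to-noise ratios: the common factor
by which both have to be scaled for `(1 + γ * a) * (1 + γ * b)` to equal `1 + a + b`. It is given by
the closed formula, which has this meaning for positive `a` and `b`. -/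
noncomputable def commonScaling (a b : ℝ) : ℝ :=
  (a + b) / (2 * a * b) * (Real.sqrt (1 + 4 * a * b / (a + b)) - 1)

namespace commonScaling

variable {a b : ℝ}

theorem pos (ha : 0 < a) (hb : 0 < b) : 0 < commonScaling a b := by
  have h_sqrt : 1 < Real.sqrt (1 + 4 * a * b / (a + b)) :=
    Real.lt_sqrt_of_sq_lt ((one_pow 2).trans_lt (lt_add_of_pos_right 1 (by positivity)))
  exact mul_pos (by positivity) (sub_pos.mpr h_sqrt)

theorem one_add_mul_mul_one_add_mul (ha : 0 < a) (hb : 0 < b) :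
    (1 + commonScaling a b * a) * (1 + commonScaling a b * b) = 1 + a + b :=
  one_add_mul_mul_one_add_mul_eq_of_sq_eq ha.ne' hb.ne' (add_pos ha hb).ne'
    (Real.sq_sqrt (by positivity))

theorem lt_one (ha : 0 < a) (hb : 0 < b) : commonScaling a b < 1 := by
  refine ((strictMonoOn_one_add_mul_mul_one_add_mul ha.le hb).lt_iff_lt
    (pos ha hb).le (zero_le_one' ℝ)).mp ?_
  calc
    (1 + commonScaling a b * a) * (1 + commonScaling a b * b) = 1 + a + b :=
      one_add_mul_mul_one_add_mul ha hb
    _ < 1 + a + b + a * b := lt_add_of_pos_right _ (mul_pos ha hb)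
    _ = (1 + 1 * a) * (1 + 1 * b) := by ring

theorem eq_of_one_add_mul_mul_one_add_mul_eq (ha : 0 < a) (hb : 0 < b) {x : ℝ} (hx : 0 ≤ x)
    (h : (1 + x * a) * (1 + x * b) = 1 + a + b) : x = commonScaling a b :=
  (strictMonoOn_one_add_mul_mul_one_add_mul ha.le hb).injOn hx (pos ha hb).le
    (h.trans (one_add_mul_mul_one_add_mul ha hb).symm)

end commonScaling

/-- Core identity of Theorem 3: the quantity
γ = ((SNR₁₁+SNR₁₂)/(2·SNR₁₁·SNR₁₂))·(√(1 + 4·SNR₁₁·SNR₁₂/(SNR₁₁+SNR₁₂)) − 1)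
lies in (0,1), satisfies (1+γ·SNR₁₁)·(1+γ·SNR₁₂) = 1 + SNR₁₁ + SNR₁₂, and is
the unique nonnegative real with this property. -/
theorem gamma_identity (SNR₁₁ SNR₁₂ : ℝ) (hS₁ : 0 < SNR₁₁) (hS₂ : 0 < SNR₁₂) :
    0 < (SNR₁₁ + SNR₁₂) / (2 * SNR₁₁ * SNR₁₂) *
        (Real.sqrt (1 + 4 * SNR₁₁ * SNR₁₂ / (SNR₁₁ + SNR₁₂)) - 1) ∧
    (SNR₁₁ + SNR₁₂) / (2 * SNR₁₁ * SNR₁₂) *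
        (Real.sqrt (1 + 4 * SNR₁₁ * SNR₁₂ / (SNR₁₁ + SNR₁₂)) - 1) < 1 ∧
    (1 + (SNR₁₁ + SNR₁₂) / (2 * SNR₁₁ * SNR₁₂) *
          (Real.sqrt (1 + 4 * SNR₁₁ * SNR₁₂ / (SNR₁₁ + SNR₁₂)) - 1) * SNR₁₁) *
      (1 + (SNR₁₁ + SNR₁₂) / (2 * SNR₁₁ * SNR₁₂) *
          (Real.sqrt (1 + 4 * SNR₁₁ * SNR₁₂ / (SNR₁₁ + SNR₁₂)) - 1) * SNR₁₂)
      = 1 + SNR₁₁ + SNR₁₂ ∧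
    ∀ γ' : ℝ, 0 ≤ γ' →
      (1 + γ' * SNR₁₁) * (1 + γ' * SNR₁₂) = 1 + SNR₁₁ + SNR₁₂ →
      γ' = (SNR₁₁ + SNR₁₂) / (2 * SNR₁₁ * SNR₁₂) *
        (Real.sqrt (1 + 4 * SNR₁₁ * SNR₁₂ / (SNR₁₁ + SNR₁₂)) - 1) := by
  exact ⟨commonScaling.pos hS₁ hS₂, commonScaling.lt_one hS₁ hS₂,
    commonScaling.one_add_mul_mul_one_add_mul hS₁ hS₂,
    fun _ ↦ commonScaling.eq_of_one_add_mul_mul_one_add_mul_eq hS₁ hS₂⟩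
end

section
/- No feedback gain at very low SNR (Corollary 1): for fixed real parameters ν > 0, η > 0, ψ > 0, define γ̃(S) := ((1 + ν)/(2·ν·S))·(√(1 + 4·ν·S/(1 + ν)) − 1) and r(S) := 1 + (2·ψ·S·√(η·(1 − γ̃(S)))) / (1 + (1 + η)·ψ·S) for S > 0. Then r(S) → 1 as S → 0⁺. -/
open Filter Topology

/-! Since `γ̃ ≥ 0`, the radical in `r` is at most `√η`, and the denominator of `r - 1` is at least
`1`. Hence `0 ≤ r(S) - 1 ≤ 2ψ√η · S`: the feedback gain is at most linear in the SNR. -/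

/-- The function `γ̃(S)` of the paper, through which the information-branch SNR enters the feedback
gain. At `S = 0` division by zero makes it `0`, not its limit `1`. -/
noncomputable def gammaTilde (ν S : ℝ) : ℝ :=
  (1 + ν) / (2 * ν * S) * (√(1 + 4 * ν * S / (1 + ν)) - 1)

/-- The relative feedback gain `B_FB / B_NF - 1`, with the value `γ` of `γ̃` as a free variable, so
that `r(S) = 1 + feedbackGain η ψ (gammaTilde ν S) S`. -/
noncomputable def feedbackGain (η ψ γ S : ℝ) : ℝ :=
  2 * ψ * S * √(η * (1 - γ)) / (1 + (1 + η) * ψ * S)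

theorem gammaTilde_nonneg {ν S : ℝ} (hν : 0 ≤ ν) (hS : 0 ≤ S) : 0 ≤ gammaTilde ν S := by
  have one_le_root : 1 ≤ √(1 + 4 * ν * S / (1 + ν)) :=
    Real.one_le_sqrt.mpr (le_add_of_nonneg_right (by positivity))
  exact mul_nonneg (by positivity) (sub_nonneg.mpr one_le_root)

section FeedbackGain

variable {η ψ γ S : ℝ}

theorem feedbackGain_nonneg (hη : 0 ≤ η) (hψ : 0 ≤ ψ) (hS : 0 ≤ S) :
    0 ≤ feedbackGain η ψ γ S := by
  unfold feedbackGain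
  positivity

theorem feedbackGain_le (hη : 0 ≤ η) (hψ : 0 ≤ ψ) (hγ : 0 ≤ γ) (hS : 0 ≤ S) :
    feedbackGain η ψ γ S ≤ 2 * ψ * S * √η := by
  have one_le_denom : 1 ≤ 1 + (1 + η) * ψ * S := le_add_of_nonneg_right (by positivity)
  have radicand_le : η * (1 - γ) ≤ η := mul_le_of_le_one_right hη (sub_le_self 1 hγ)
  calc
    feedbackGain η ψ γ S ≤ 2 * ψ * S * √(η * (1 - γ)) := div_le_self (by positivity) one_le_denom
    _ ≤ 2 * ψ * S * √η := by gcongr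

theorem tendsto_feedbackGain_zero {g : ℝ → ℝ} (hη : 0 ≤ η) (hψ : 0 ≤ ψ)
    (hg : ∀ᶠ S in 𝓝[>] 0, 0 ≤ g S) :
    Tendsto (fun S ↦ feedbackGain η ψ (g S) S) (𝓝[>] 0) (𝓝 0) := by
  have linear_bound_tendsto : Tendsto (fun S : ℝ ↦ 2 * ψ * S * √η) (𝓝[>] 0) (𝓝 0) :=
    tendsto_nhdsWithin_of_tendsto_nhds (Continuous.tendsto' (by fun_prop) _ _ (by simp))
  refine squeeze_zero' ?_ ?_ linear_bound_tendsto
  · filter_upwards [self_mem_nhdsWithin] with S hS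
    exact feedbackGain_nonneg hη hψ (le_of_lt hS)
  · filter_upwards [self_mem_nhdsWithin, hg] with S hS hgS
    exact feedbackGain_le hη hψ hgS (le_of_lt hS)

end FeedbackGain

/-- Corollary 1: no feedback energy gain at very low SNR. With
γ̃(S) = ((1+ν)/(2νS))·(√(1 + 4νS/(1+ν)) − 1) and
r(S) = 1 + (2ψS·√(η·(1−γ̃(S)))) / (1 + (1+η)·ψ·S), one has r(S) → 1 as S → 0⁺. -/
theorem no_feedback_gain_low_snr (ν η ψ : ℝ) (hν : 0 < ν) (hη : 0 < η) (hψ : 0 < ψ) :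
    Tendsto (fun S : ℝ =>
        1 + (2 * ψ * S * Real.sqrt (η * (1 - (1 + ν) / (2 * ν * S) *
            (Real.sqrt (1 + 4 * ν * S / (1 + ν)) - 1)))) /
          (1 + (1 + η) * ψ * S))
      (nhdsWithin 0 (Set.Ioi 0)) (nhds 1) := by
  have gammaTilde_eventually_nonneg : ∀ᶠ S in 𝓝[>] (0 : ℝ), 0 ≤ gammaTilde ν S := by
    filter_upwards [self_mem_nhdsWithin] with S hS
    exact gammaTilde_nonneg hν.le (le_of_lt hS)
  have gain_tendsto := tendsto_feedbackGain_zero hη.le hψ.le gammaTilde_eventually_nonneg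
  simpa only [feedbackGain, gammaTilde, add_zero] using gain_tendsto.const_add 1
end
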